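/- arXiv:physics/0610130 — 6 statements merged into one kernel-verified Lean document; each statement's English description precedes it below -/
import Mathlib

section
/- Let k₁,k₂ > 0 and let U₁, U₂ : ℝ³ → ℂ be Schwartz functions, and let W be their two-frequency Wigner distribution. Then for every x ∈ ℝ³ the first moment in p satisfies ∫_{ℝ³} p · W(x,p) dp = −i [ (1/(2k₁)) (∇U₁)(x/k₁) · conj(U₂(x/k₂)) − (1/(2k₂)) U₁(x/k₁) · conj((∇U₂)(x/k₂)) ], as an identity of vectors in ℂ³ (the integral converging absolutely since W(x,·) is Schwartz in p). -/
open MeasureTheory Complex Filter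
open scoped RealInnerProductSpace Topology

noncomputable section

/-!
For fixed `x` the Wigner distribution `W(x, ·)` is the Fourier transform of the correlation
`y ↦ U₁(x/k₁ + y/(2k₁)) conj(U₂(x/k₂ - y/(2k₂)))`, which is Schwartz. The Fourier transform turns
the derivative `-i ∂ₘ` into multiplication by `⟪p, m⟫`, so by Fourier inversion at the origin the
first moment of `W(x, ·)` in the direction `m` is `-i ∂ₘ` of the correlation at `y = 0`, which the
product rule evaluates.
-/

open Module
open scoped SchwartzMap FourierTransform LineDeriv ComplexConjugate

section AngularFourier

variable {V E : Type*} [NormedAddCommGroup V] [InnerProductSpace ℝ V] [FiniteDimensional ℝ V]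
  [MeasurableSpace V] [BorelSpace V] [NormedAddCommGroup E] [NormedSpace ℂ E]

/-- The Fourier transform in terms of the angular frequency `p`, normalised so that its inverse is
the plain integral of `exp (i ⟪p, y⟫)` against it. Mathlib's `𝓕` uses the ordinary frequency
`ξ = p / 2π` instead. -/
def angularFourier (f : V → E) (p : V) : E :=
  ((2 * Real.pi) ^ finrank ℝ V : ℝ)⁻¹ • ∫ y, cexp (-(I * (⟪p, y⟫ : ℂ))) • f y

theorem angularFourier_two_pi_smul (f : V → E) (ξ : V) :
    angularFourier f ((2 * Real.pi) • ξ) = ((2 * Real.pi) ^ finrank ℝ V : ℝ)⁻¹ • 𝓕 f ξ := by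
  rw [angularFourier, Real.fourier_eq']
  congr! 5 with y
  rw [real_inner_smul_left, real_inner_comm]
  push_cast
  ring

theorem fourier_lineDerivOp_apply (g : 𝓢(V, E)) (m ξ : V) :
    𝓕 (∂_{m} g) ξ = (2 * Real.pi * I * ⟪ξ, m⟫) • 𝓕 g ξ := by
  have inner_growth : (fun ξ : V => ⟪ξ, m⟫).HasTemperateGrowth :=
    ((innerSL ℝ).flip m).hasTemperateGrowth
  rw [SchwartzMap.fourier_lineDerivOp_eq, _root_.smul_apply,
    SchwartzMap.smulLeftCLM_apply_apply inner_growth, ← Complex.coe_smul, smul_smul]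

theorem inner_smul_angularFourier_two_pi_smul (g : 𝓢(V, E)) (m ξ : V) :
    (⟪(2 * Real.pi) • ξ, m⟫ : ℂ) • angularFourier g ((2 * Real.pi) • ξ) =
      ((2 * Real.pi) ^ finrank ℝ V : ℝ)⁻¹ • -I • 𝓕 (∂_{m} g) ξ := by
  rw [angularFourier_two_pi_smul, smul_comm, fourier_lineDerivOp_apply, smul_smul,
    SchwartzMap.fourier_coe, real_inner_smul_left]
  congr 2
  push_cast
  linear_combination (2 * Real.pi * ⟪ξ, m⟫ : ℂ) * I_mul_I

theorem integrable_inner_smul_angularFourier (g : 𝓢(V, E)) (m : V) :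
    Integrable fun p : V => (⟪p, m⟫ : ℂ) • angularFourier g p := by
  rw [← integrable_comp_smul_iff volume _ Real.two_pi_pos.ne']
  simp only [inner_smul_angularFourier_two_pi_smul]
  exact ((𝓕 (∂_{m} g)).integrable.smul (-I)).smul _

variable [CompleteSpace E]

theorem integral_fourier_eq_apply_zero {f : V → E} (hcont : Continuous f) (hf : Integrable f)
    (hFf : Integrable (𝓕 f)) : ∫ ξ, 𝓕 f ξ = f 0 := by
  rw [← congrFun (hcont.fourierInv_fourier_eq hf hFf) 0, Real.fourierInv_eq']
  simp

theorem integral_inner_smul_angularFourier (g : 𝓢(V, E)) (m : V) :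
    ∫ p : V, (⟪p, m⟫ : ℂ) • angularFourier g p = -I • fderiv ℝ g 0 m := by
  have normalization_ne_zero : ((2 * Real.pi) ^ finrank ℝ V : ℝ)⁻¹ ≠ 0 := by positivity
  refine smul_right_injective E normalization_ne_zero ?_
  calc ((2 * Real.pi) ^ finrank ℝ V : ℝ)⁻¹ • ∫ p : V, (⟪p, m⟫ : ℂ) • angularFourier g p
      = ∫ ξ : V, (⟪(2 * Real.pi) • ξ, m⟫ : ℂ) • angularFourier g ((2 * Real.pi) • ξ) :=
        (Measure.integral_comp_smul_of_nonneg volume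
          (fun p : V => (⟪p, m⟫ : ℂ) • angularFourier g p) _ (hR := Real.two_pi_pos.le)).symm
    _ = ((2 * Real.pi) ^ finrank ℝ V : ℝ)⁻¹ • -I • ∫ ξ, 𝓕 (∂_{m} g) ξ := by
        simp only [inner_smul_angularFourier_two_pi_smul, integral_smul]
    _ = ((2 * Real.pi) ^ finrank ℝ V : ℝ)⁻¹ • -I • fderiv ℝ g 0 m := by
        rw [SchwartzMap.fourier_coe, integral_fourier_eq_apply_zero (∂_{m} g).continuous
          (∂_{m} g).integrable (𝓕 (∂_{m} g)).integrable,
          SchwartzMap.lineDerivOp_apply_eq_fderiv]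

end AngularFourier

section WignerCorrelation

variable {V F : Type*} [NormedAddCommGroup V] [NormedSpace ℝ V]
  [NormedAddCommGroup F] [NormedSpace ℝ F]

theorem exists_schwartzMap_coe_eq_comp_add_smul (f : 𝓢(V, F)) (a : V) {c : ℝ} (hc : c ≠ 0) :
    ∃ g : 𝓢(V, F), ⇑g = fun y => f (a + c • y) := by
  refine ⟨SchwartzMap.compCLMOfContinuousLinearEquiv ℝ
    (ContinuousLinearEquiv.smulLeft (Units.mk0 c hc)) (SchwartzMap.compSubConstCLM ℝ (-a) f), ?_⟩
  ext y
  simp [add_comm, Units.smul_def]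

theorem hasFDerivAt_comp_add_smul_zero {f : V → F} {a : V} (hf : DifferentiableAt ℝ f a) (c : ℝ) :
    HasFDerivAt (fun y => f (a + c • y)) (c • fderiv ℝ f a) 0 := by
  have affine : HasFDerivAt (fun y : V => a + c • y) (c • ContinuousLinearMap.id ℝ V) 0 :=
    ((hasFDerivAt_id 0).const_smul c).const_add a
  have hf' : HasFDerivAt f (fderiv ℝ f a) (a + c • (0 : V)) := by simpa using hf.hasFDerivAt
  simpa [Function.comp_def] using hf'.comp 0 affine

/-- The correlation of `U₁` and `U₂` about `x`, rescaled by the wavenumbers `k₁` and `k₂`: the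
function of `y` whose Fourier transform is the two-frequency Wigner distribution at `x`. -/
def wignerCorrelation (k₁ k₂ : ℝ) (U₁ U₂ : V → ℂ) (x y : V) : ℂ :=
  U₁ (k₁⁻¹ • x + (2 * k₁)⁻¹ • y) * conj (U₂ (k₂⁻¹ • x - (2 * k₂)⁻¹ • y))

theorem exists_schwartzMap_coe_eq_wignerCorrelation {k₁ k₂ : ℝ} (hk₁ : k₁ ≠ 0) (hk₂ : k₂ ≠ 0)
    (U₁ U₂ : 𝓢(V, ℂ)) (x : V) : ∃ g : 𝓢(V, ℂ), ⇑g = wignerCorrelation k₁ k₂ U₁ U₂ x := by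
  obtain ⟨g₁, hg₁⟩ := exists_schwartzMap_coe_eq_comp_add_smul U₁ (k₁⁻¹ • x)
    (c := (2 * k₁)⁻¹) (by positivity)
  obtain ⟨g₂, hg₂⟩ := exists_schwartzMap_coe_eq_comp_add_smul U₂ (k₂⁻¹ • x)
    (c := -(2 * k₂)⁻¹) (neg_ne_zero.2 (by positivity))
  refine ⟨SchwartzMap.pairing (ContinuousLinearMap.mul ℝ ℂ) g₁
    (SchwartzMap.postcompCLM (conjCLE : ℂ →L[ℝ] ℂ) g₂), ?_⟩
  ext y
  simp [wignerCorrelation, hg₁, hg₂, sub_eq_add_neg]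

theorem fderiv_wignerCorrelation_zero (k₁ k₂ : ℝ) {U₁ U₂ : V → ℂ} {x : V}
    (hU₁ : DifferentiableAt ℝ U₁ (k₁⁻¹ • x)) (hU₂ : DifferentiableAt ℝ U₂ (k₂⁻¹ • x)) (m : V) :
    fderiv ℝ (wignerCorrelation k₁ k₂ U₁ U₂ x) 0 m =
      ((2 * k₁ : ℝ) : ℂ)⁻¹ * fderiv ℝ U₁ (k₁⁻¹ • x) m * conj (U₂ (k₂⁻¹ • x)) -
        ((2 * k₂ : ℝ) : ℂ)⁻¹ * U₁ (k₁⁻¹ • x) * conj (fderiv ℝ U₂ (k₂⁻¹ • x) m) := by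
  have deriv₁ := hasFDerivAt_comp_add_smul_zero hU₁ (2 * k₁)⁻¹
  have deriv₂ := (hasFDerivAt_comp_add_smul_zero hU₂ (-(2 * k₂)⁻¹)).star
  have corr_eq : wignerCorrelation k₁ k₂ U₁ U₂ x = fun y =>
      U₁ (k₁⁻¹ • x + (2 * k₁)⁻¹ • y) * star (U₂ (k₂⁻¹ • x + -(2 * k₂)⁻¹ • y)) := by
    ext y
    simp [wignerCorrelation, sub_eq_add_neg]
  rw [corr_eq, (deriv₁.fun_mul deriv₂).fderiv]
  simp only [smul_zero, add_zero, neg_smul, ContinuousLinearMap.comp_neg,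
    ContinuousLinearMap.comp_smulₛₗ, Real.ringHom_apply, smul_neg, RCLike.star_def, add_apply,
    neg_apply, smul_apply, ContinuousLinearMap.comp_apply, ContinuousLinearEquiv.coe_coe,
    starL'_apply, real_smul, ofReal_inv, smul_eq_mul]
  ring

end WignerCorrelation

section Wigner

variable {V : Type*} [NormedAddCommGroup V] [InnerProductSpace ℝ V] [FiniteDimensional ℝ V]
  [MeasurableSpace V] [BorelSpace V]

/-- The two-frequency Wigner distribution of `U₁` and `U₂` at the wavenumbers `k₁` and `k₂`, over
an arbitrary Euclidean space `V`. -/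
def twoFrequencyWigner (k₁ k₂ : ℝ) (U₁ U₂ : V → ℂ) (x p : V) : ℂ :=
  angularFourier (wignerCorrelation k₁ k₂ U₁ U₂ x) p

theorem two_frequency_wigner_first_moment_general {k₁ k₂ : ℝ} (hk₁ : k₁ ≠ 0) (hk₂ : k₂ ≠ 0)
    (U₁ U₂ : 𝓢(V, ℂ)) (x m : V) :
    (Integrable fun p : V => (⟪p, m⟫ : ℂ) * twoFrequencyWigner k₁ k₂ U₁ U₂ x p) ∧
      ∫ p : V, (⟪p, m⟫ : ℂ) * twoFrequencyWigner k₁ k₂ U₁ U₂ x p =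
        -I * (((2 * k₁ : ℝ) : ℂ)⁻¹ * fderiv ℝ U₁ (k₁⁻¹ • x) m * conj (U₂ (k₂⁻¹ • x)) -
          ((2 * k₂ : ℝ) : ℂ)⁻¹ * U₁ (k₁⁻¹ • x) * conj (fderiv ℝ U₂ (k₂⁻¹ • x) m)) := by
  obtain ⟨g, hg⟩ := exists_schwartzMap_coe_eq_wignerCorrelation hk₁ hk₂ U₁ U₂ x
  simp only [twoFrequencyWigner, ← hg,
    ← fderiv_wignerCorrelation_zero k₁ k₂ U₁.differentiableAt U₂.differentiableAt]
  exact ⟨integrable_inner_smul_angularFourier g m, integral_inner_smul_angularFourier g m⟩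

end Wigner

/-- The first moment in `p` of the two-frequency Wigner distribution:
for every `x`, componentwise in `j`,
`∫ p_j W(x,p) dp = −i [ (2k₁)⁻¹ (∂_j U₁)(x/k₁) conj(U₂(x/k₂))
  − (2k₂)⁻¹ U₁(x/k₁) conj((∂_j U₂)(x/k₂)) ]`. -/
theorem two_frequency_wigner_first_moment
    (k₁ k₂ : ℝ) (hk₁ : 0 < k₁) (hk₂ : 0 < k₂)
    (U₁ U₂ : SchwartzMap (EuclideanSpace ℝ (Fin 3)) ℂ)
    (W : EuclideanSpace ℝ (Fin 3) → EuclideanSpace ℝ (Fin 3) → ℂ)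
    (hW : ∀ x p : EuclideanSpace ℝ (Fin 3), W x p =
      ((2 * Real.pi) ^ 3 : ℝ)⁻¹ *
        ∫ y : EuclideanSpace ℝ (Fin 3),
          Complex.exp (-(Complex.I * (⟪p, y⟫ : ℂ))) *
            U₁ (k₁⁻¹ • x + (2 * k₁)⁻¹ • y) *
            (starRingEnd ℂ) (U₂ (k₂⁻¹ • x - (2 * k₂)⁻¹ • y))) :
    ∀ x : EuclideanSpace ℝ (Fin 3), ∀ j : Fin 3,
      (∫ p : EuclideanSpace ℝ (Fin 3), ((p j : ℝ) : ℂ) * W x p)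
        = -Complex.I *
            (((2 * k₁ : ℝ) : ℂ)⁻¹ *
                fderiv ℝ (fun w => U₁ w) (k₁⁻¹ • x) (EuclideanSpace.single j 1) *
                (starRingEnd ℂ) (U₂ (k₂⁻¹ • x))
              - ((2 * k₂ : ℝ) : ℂ)⁻¹ * U₁ (k₁⁻¹ • x) *
                (starRingEnd ℂ)
                  (fderiv ℝ (fun w => U₂ w) (k₂⁻¹ • x) (EuclideanSpace.single j 1))) := by
  intro x j
  have hWx (p) : W x p = twoFrequencyWigner k₁ k₂ U₁ U₂ x p := by
    simp [hW, twoFrequencyWigner, angularFourier, wignerCorrelation, mul_assoc]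
  simpa [hWx, EuclideanSpace.inner_single_right] using
    (two_frequency_wigner_first_moment_general hk₁.ne' hk₂.ne' U₁ U₂ x
      (EuclideanSpace.single j 1)).2
end
end

section
/- (Sokhotski–Plemelj limit) Let f : ℝ → ℂ be a Schwartz function. Then the principal value PV∫ f(ξ)/ξ dξ := lim_{δ→0⁺} ∫_{|ξ|≥δ} f(ξ)/ξ dξ exists, and lim_{η→0⁺} ∫_ℝ f(ξ)/(η + iξ) dξ = π f(0) − i · PV∫ f(ξ)/ξ dξ. -/
open MeasureTheory Complex Filter
open scoped Topology

noncomputable section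

/-!
Split `1 / (η + iξ) = η / (η² + ξ²) - i ξ / (η² + ξ²)`. The first kernel is `π` times an
approximate identity. The second, like the truncation of `1 / ξ` to `|ξ| ≥ δ`, is a bounded odd
kernel `K` with `|ξ K(ξ)| ≤ 1` and `ξ K(ξ) → 1`. Oddness turns `∫ K(ξ) f(ξ) dξ` into the integral
of `ξ K(ξ)` against `(f(ξ) - f(-ξ)) / (2ξ)`, so by dominated convergence both families share the
limit `∫ (f(ξ) - f(-ξ)) / (2ξ) dξ`, which is therefore the principal value.
-/

variable {E : Type*} [NormedAddCommGroup E]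

section OddKernels

variable [NormedSpace ℝ E] {f : ℝ → E} {K : ℝ → ℝ} {μ : Measure ℝ}

/-- The symmetric difference quotient `(f x - f (-x)) / (2 * x)` of `f` at the origin, whose
integral is the principal value of `∫ f x / x`. It takes the value `0` at `x = 0`. -/
def symmDiffQuot (f : ℝ → E) (x : ℝ) : E :=
  (2 * x)⁻¹ • (f x - f (-x))

/-- The kernel `1 / x` cut off to `δ ≤ |x|`. -/
def truncInv (δ : ℝ) : ℝ → ℝ :=
  {x | δ ≤ |x|}.indicator fun x => x⁻¹

/-- The conjugate Poisson kernel of the half-plane at height `η`, without the usual factor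
`1 / π`. -/
def conjPoissonKernel (η x : ℝ) : ℝ :=
  x / (η ^ 2 + x ^ 2)

/-- A family of bounded odd kernels that converges to `1 / x` along `l` while being dominated by it,
so that integration against `K i` converges to the principal value. -/
structure IsOddApproxInv {ι : Type*} (K : ι → ℝ → ℝ) (l : Filter ι) : Prop where
  measurable : ∀ᶠ i in l, Measurable (K i)
  odd : ∀ᶠ i in l, (K i).Odd
  bounded : ∀ᶠ i in l, ∃ C, ∀ x, |K i x| ≤ C
  abs_mul_le_one : ∀ᶠ i in l, ∀ x, |x * K i x| ≤ 1
  tendsto_mul : ∀ x ≠ 0, Tendsto (fun i => x * K i x) l (𝓝 1)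

lemma integrable_smul_of_bounded (hf : Integrable f μ) (hK : Measurable K) {C : ℝ}
    (hC : ∀ x, |K x| ≤ C) : Integrable (fun x => K x • f x) μ :=
  hf.bdd_smul C hK.aestronglyMeasurable (ae_of_all _ hC)

lemma smul_symmDiffQuot_of_odd (hK : K.Odd) (x : ℝ) :
    (x * K x) • symmDiffQuot f x = (2⁻¹ : ℝ) • (K x • f x + K (-x) • f (-x)) := by
  rcases eq_or_ne x 0 with rfl | hx
  · simp [hK.map_zero]
  · have hscalar : x * K x * (2 * x)⁻¹ = 2⁻¹ * K x := by field_simp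
    rw [symmDiffQuot, hK x, smul_smul, hscalar, neg_smul, ← sub_eq_add_neg, ← smul_sub, smul_smul]

lemma integral_odd_smul [μ.IsNegInvariant] (hK : K.Odd)
    (hKf : Integrable (fun x => K x • f x) μ) :
    ∫ x, K x • f x ∂μ = ∫ x, (x * K x) • symmDiffQuot f x ∂μ := by
  simp_rw [smul_symmDiffQuot_of_odd hK]
  rw [integral_smul, integral_add hKf hKf.comp_neg,
    integral_neg_eq_self (fun x => K x • f x) μ, ← two_smul ℝ, inv_smul_smul₀ two_ne_zero]

lemma IsOddApproxInv.tendsto_integral_smul {ι : Type*} {l : Filter ι} [l.IsCountablyGenerated]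
    {K : ι → ℝ → ℝ} (hK : IsOddApproxInv K l) [μ.IsNegInvariant] (hf : Integrable f μ)
    (hquot : Integrable (symmDiffQuot f) μ) :
    Tendsto (fun i => ∫ x, K i x • f x ∂μ) l (𝓝 (∫ x, symmDiffQuot f x ∂μ)) := by
  have hsymm : ∀ᶠ i in l,
      ∫ x, (x * K i x) • symmDiffQuot f x ∂μ = ∫ x, K i x • f x ∂μ := by
    filter_upwards [hK.measurable, hK.odd, hK.bounded] with i hmeas hodd ⟨C, hC⟩
    exact (integral_odd_smul hodd (integrable_smul_of_bounded hf hmeas hC)).symm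
  refine Tendsto.congr' hsymm (tendsto_integral_filter_of_dominated_convergence
    (fun x => ‖symmDiffQuot f x‖) ?_ ?_ hquot.norm (ae_of_all _ fun x => ?_))
  · filter_upwards [hK.measurable] with i hmeas
    exact (measurable_id.mul hmeas).aestronglyMeasurable.smul hquot.aestronglyMeasurable
  · filter_upwards [hK.abs_mul_le_one] with i hle
    refine ae_of_all _ fun x => ?_
    rw [norm_smul]
    exact mul_le_of_le_one_left (norm_nonneg _) (hle x)
  · rcases eq_or_ne x 0 with rfl | hx
    · simp [symmDiffQuot, tendsto_const_nhds]
    · simpa only [one_smul] using (hK.tendsto_mul x hx).smul_const (symmDiffQuot f x)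

lemma measurableSet_le_abs (δ : ℝ) : MeasurableSet {x : ℝ | δ ≤ |x|} :=
  measurableSet_le measurable_const measurable_id.abs

lemma measurable_truncInv (δ : ℝ) : Measurable (truncInv δ) :=
  measurable_inv.indicator (measurableSet_le_abs δ)

lemma abs_truncInv_le {δ : ℝ} (hδ : 0 < δ) (x : ℝ) : |truncInv δ x| ≤ δ⁻¹ := by
  by_cases hx : δ ≤ |x|
  · rw [truncInv, Set.indicator_of_mem (by exact hx), abs_inv]
    exact inv_anti₀ hδ hx
  · rw [truncInv, Set.indicator_of_notMem (by exact hx), abs_zero]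
    positivity

lemma isOddApproxInv_truncInv : IsOddApproxInv truncInv (𝓝[>] 0) where
  measurable := .of_forall measurable_truncInv
  odd := .of_forall fun δ x => by
    by_cases hx : δ ≤ |x| <;> simp [truncInv, hx, inv_neg]
  bounded := by
    filter_upwards [self_mem_nhdsWithin] with δ hδ using ⟨δ⁻¹, abs_truncInv_le hδ⟩
  abs_mul_le_one := .of_forall fun δ x => by
    by_cases hx : δ ≤ |x|
    · simpa [truncInv, hx, abs_mul, abs_inv, div_eq_mul_inv] using div_self_le_one |x|
    · simp [truncInv, hx]
  tendsto_mul x hx := by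
    have hsmall : ∀ᶠ δ : ℝ in 𝓝[>] 0, δ < |x| :=
      nhdsWithin_le_nhds (Iio_mem_nhds (abs_pos.2 hx))
    refine tendsto_const_nhds.congr' ?_
    filter_upwards [hsmall] with δ hδ
    simp [truncInv, hδ.le, hx]

lemma setIntegral_inv_smul_eq_integral_truncInv_smul (f : ℝ → E) (δ : ℝ) :
    ∫ x in {x | δ ≤ |x|}, x⁻¹ • f x ∂μ = ∫ x, truncInv δ x • f x ∂μ := by
  rw [← integral_indicator (measurableSet_le_abs δ)]
  simp only [truncInv, Set.indicator_smul_left]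

lemma measurable_conjPoissonKernel (η : ℝ) : Measurable (conjPoissonKernel η) :=
  measurable_id.div (by fun_prop)

lemma abs_conjPoissonKernel_le {η : ℝ} (hη : 0 < η) (x : ℝ) : |conjPoissonKernel η x| ≤ η⁻¹ := by
  rw [conjPoissonKernel, abs_div, abs_of_pos (by positivity : 0 < η ^ 2 + x ^ 2), ← one_div,
    div_le_div_iff₀ (by positivity) hη, ← sq_abs x]
  nlinarith [sq_nonneg (η - |x|), sq_nonneg (η + |x|)]

lemma mul_conjPoissonKernel (η x : ℝ) :
    x * conjPoissonKernel η x = x ^ 2 / (η ^ 2 + x ^ 2) := by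
  rw [conjPoissonKernel]
  ring

lemma isOddApproxInv_conjPoissonKernel : IsOddApproxInv conjPoissonKernel (𝓝[>] 0) where
  measurable := .of_forall measurable_conjPoissonKernel
  odd := .of_forall fun η x => by simp [conjPoissonKernel, neg_div]
  bounded := by
    filter_upwards [self_mem_nhdsWithin] with η hη using ⟨η⁻¹, abs_conjPoissonKernel_le hη⟩
  abs_mul_le_one := .of_forall fun η x => by
    rw [mul_conjPoissonKernel, abs_of_nonneg (by positivity)]
    exact div_le_one_of_le₀ (le_add_of_nonneg_left (sq_nonneg η)) (by positivity)
  tendsto_mul x hx := by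
    simp only [mul_conjPoissonKernel]
    have hcont : ContinuousAt (fun η : ℝ => x ^ 2 / (η ^ 2 + x ^ 2)) 0 :=
      continuousAt_const.div (by fun_prop) (by positivity)
    have hvalue : x ^ 2 / ((0 : ℝ) ^ 2 + x ^ 2) = 1 := by simp [hx]
    simpa only [hvalue] using hcont.tendsto.mono_left nhdsWithin_le_nhds

lemma symmDiffQuot_eq_truncInv_smul {δ x : ℝ} (hx : δ ≤ |x|) :
    symmDiffQuot f x = truncInv δ x • (2⁻¹ : ℝ) • (f x - f (-x)) := by
  rw [truncInv, Set.indicator_of_mem (by exact hx), symmDiffQuot, mul_inv_rev, mul_smul]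

lemma integrable_symmDiffQuot [μ.IsNegInvariant] (hf : Integrable f μ)
    (hquot : IntegrableAtFilter (symmDiffQuot f) (𝓝 0) μ) : Integrable (symmDiffQuot f) μ := by
  obtain ⟨s, hs, hnear⟩ := hquot
  obtain ⟨δ, hδ, hball⟩ := Metric.mem_nhds_iff.1 hs
  have hfar : IntegrableOn (symmDiffQuot f) {x | δ ≤ |x|} μ :=
    (integrable_smul_of_bounded ((hf.sub hf.comp_neg).smul (2⁻¹ : ℝ)) (measurable_truncInv δ)
      (abs_truncInv_le hδ)).integrableOn.congr_fun
        (fun _ hx => (symmDiffQuot_eq_truncInv_smul hx).symm) (measurableSet_le_abs δ)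
  have hcover : Metric.ball 0 δ ∪ {x : ℝ | δ ≤ |x|} = Set.univ := by
    ext x
    simp [lt_or_ge]
  rw [← integrableOn_univ, ← hcover]
  exact (hnear.mono_set hball).union hfar

lemma isBigO_symmDiffQuot_one_of_differentiableAt (hdiff : DifferentiableAt ℝ f 0) :
    symmDiffQuot f =O[𝓝 0] fun _ => (1 : ℝ) := by
  have hright : (fun x => f x - f 0) =O[𝓝 0] fun x => x := by
    simpa only [sub_zero] using hdiff.isBigO_sub
  have hneg : Tendsto (fun x : ℝ => -x) (𝓝 0) (𝓝 0) := by
    simpa only [neg_zero] using (continuous_neg (G := ℝ)).tendsto 0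
  have hdiff_odd : (fun x => f x - f (-x)) =O[𝓝 0] fun x => x := by
    simpa only [Function.comp_def, sub_sub_sub_cancel_right] using
      hright.sub (Asymptotics.isBigO_neg_right.1 (hright.comp_tendsto hneg))
  refine ((Asymptotics.isBigO_refl (fun x : ℝ => (2 * x)⁻¹) (𝓝 0)).smul hdiff_odd).trans
    (.of_bound 1 (.of_forall fun x => ?_))
  rcases eq_or_ne x 0 with rfl | hx
  · simp
  · have hhalf : (2 * x)⁻¹ * x = 2⁻¹ := by field_simp
    rw [smul_eq_mul, hhalf]
    norm_num

lemma aestronglyMeasurable_symmDiffQuot [μ.IsNegInvariant] (hf : AEStronglyMeasurable f μ) :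
    AEStronglyMeasurable (symmDiffQuot f) μ :=
  (measurable_const.mul measurable_id).inv.aestronglyMeasurable.smul
    (hf.sub (hf.comp_measurePreserving (Measure.measurePreserving_neg μ)))

lemma integrableAtFilter_symmDiffQuot_of_differentiableAt [μ.IsNegInvariant]
    [IsLocallyFiniteMeasure μ] (hf : AEStronglyMeasurable f μ) (hdiff : DifferentiableAt ℝ f 0) :
    IntegrableAtFilter (symmDiffQuot f) (𝓝 0) μ :=
  Measure.FiniteAtFilter.integrableAtFilter
    (aestronglyMeasurable_symmDiffQuot hf).stronglyMeasurableAtFilter (μ.finiteAt_nhds 0)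
    ((Asymptotics.isBigO_one_iff ℝ).1 (isBigO_symmDiffQuot_one_of_differentiableAt hdiff))

theorem tendsto_setIntegral_inv_smul [μ.IsNegInvariant] (hf : Integrable f μ)
    (hquot : IntegrableAtFilter (symmDiffQuot f) (𝓝 0) μ) :
    Tendsto (fun δ : ℝ => ∫ x in {x | δ ≤ |x|}, x⁻¹ • f x ∂μ) (𝓝[>] 0)
      (𝓝 (∫ x, symmDiffQuot f x ∂μ)) := by
  simp only [setIntegral_inv_smul_eq_integral_truncInv_smul]
  exact isOddApproxInv_truncInv.tendsto_integral_smul hf (integrable_symmDiffQuot hf hquot)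

end OddKernels

section PoissonKernel

/-- The Poisson kernel of the half-plane at height `η`, without the usual factor `1 / π`. -/
def halfPlanePoissonKernel (η x : ℝ) : ℝ :=
  η / (η ^ 2 + x ^ 2)

lemma measurable_halfPlanePoissonKernel (η : ℝ) : Measurable (halfPlanePoissonKernel η) :=
  measurable_const.div (by fun_prop)

lemma abs_halfPlanePoissonKernel_le {η : ℝ} (hη : 0 < η) (x : ℝ) :
    |halfPlanePoissonKernel η x| ≤ η⁻¹ := by
  rw [halfPlanePoissonKernel, abs_of_nonneg (by positivity), ← one_div,
    div_le_div_iff₀ (by positivity) hη]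
  nlinarith [sq_nonneg x]

lemma halfPlanePoissonKernel_eq_rescaled {η : ℝ} (hη : 0 < η) (x : ℝ) :
    halfPlanePoissonKernel η x = η⁻¹ * (1 + (η⁻¹ * x) ^ 2)⁻¹ := by
  rw [halfPlanePoissonKernel]
  field_simp

lemma tendsto_norm_mul_inv_one_add_sq_cobounded :
    Tendsto (fun x : ℝ => ‖x‖ * (1 + x ^ 2)⁻¹) (Bornology.cobounded ℝ) (𝓝 0) := by
  refine squeeze_zero (fun x => by positivity) (fun x => ?_)
    tendsto_norm_cobounded_atTop.inv_tendsto_atTop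
  rcases eq_or_ne x 0 with rfl | hx
  · simp
  · have hx' : 0 < ‖x‖ := norm_pos_iff.2 hx
    rw [Pi.inv_apply, ← div_eq_mul_inv, ← one_div, div_le_div_iff₀ (by positivity) hx', one_mul,
      ← sq, Real.norm_eq_abs, sq_abs]
    linarith

theorem tendsto_integral_halfPlanePoissonKernel_smul [NormedSpace ℝ E] [CompleteSpace E]
    {f : ℝ → E} (hf : Integrable f) (hf₀ : ContinuousAt f 0) :
    Tendsto (fun η => ∫ x, halfPlanePoissonKernel η x • f x) (𝓝[>] 0) (𝓝 (Real.pi • f 0)) := by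
  have hmass : ∫ x : ℝ, Real.pi⁻¹ * (1 + x ^ 2)⁻¹ = 1 := by
    rw [integral_const_mul, integral_univ_inv_one_add_sq, inv_mul_cancel₀ Real.pi_ne_zero]
  have hdecay : Tendsto (fun x : ℝ => ‖x‖ ^ Module.finrank ℝ ℝ * (Real.pi⁻¹ * (1 + x ^ 2)⁻¹))
      (Bornology.cobounded ℝ) (𝓝 0) := by
    simpa [mul_left_comm] using tendsto_norm_mul_inv_one_add_sq_cobounded.const_mul Real.pi⁻¹
  have hpeak := (tendsto_integral_comp_smul_smul_of_integrable (fun x => by positivity) hmass hdecay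
    hf hf₀).comp tendsto_inv_nhdsGT_zero
  refine (hpeak.const_smul Real.pi).congr' ?_
  filter_upwards [self_mem_nhdsWithin] with η hη
  rw [Function.comp_apply, ← integral_smul]
  refine integral_congr_ae (ae_of_all _ fun x => ?_)
  simp only [Module.finrank_self, pow_one, smul_eq_mul, smul_smul,
    halfPlanePoissonKernel_eq_rescaled hη]
  congr 1
  field_simp

end PoissonKernel

section CauchyKernel

lemma inv_add_I_mul_eq_poissonKernel_sub (η x : ℝ) :
    ((η : ℂ) + I * x)⁻¹ = halfPlanePoissonKernel η x - I * conjPoissonKernel η x := by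
  have hre : ((η : ℂ) + I * x)⁻¹.re = halfPlanePoissonKernel η x := by
    simp [inv_re, normSq_apply, ← sq, halfPlanePoissonKernel]
  have him : ((η : ℂ) + I * x)⁻¹.im = -conjPoissonKernel η x := by
    simp [inv_im, normSq_apply, ← sq, conjPoissonKernel, neg_div]
  rw [← re_add_im ((η : ℂ) + I * x)⁻¹, hre, him]
  push_cast
  ring

variable [NormedSpace ℂ E] {f : ℝ → E}

lemma integral_inv_add_I_mul_smul (hf : Integrable f) {η : ℝ} (hη : 0 < η) :
    ∫ x : ℝ, ((η : ℂ) + I * x)⁻¹ • f x =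
      (∫ x, halfPlanePoissonKernel η x • f x) - I • ∫ x, conjPoissonKernel η x • f x := by
  have hpoisson := integrable_smul_of_bounded hf (measurable_halfPlanePoissonKernel η)
    (abs_halfPlanePoissonKernel_le hη)
  have hconj := integrable_smul_of_bounded hf (measurable_conjPoissonKernel η)
    (abs_conjPoissonKernel_le hη)
  simp only [inv_add_I_mul_eq_poissonKernel_sub, sub_smul, mul_smul, coe_smul]
  rw [integral_sub hpoisson (hconj.fun_smul I), integral_smul]

theorem sokhotski_plemelj_general [CompleteSpace E] (hf : Integrable f) (hf₀ : ContinuousAt f 0)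
    (hquot : IntegrableAtFilter (symmDiffQuot f) (𝓝 0)) :
    Tendsto (fun δ : ℝ => ∫ ξ in {ξ : ℝ | δ ≤ |ξ|}, ξ⁻¹ • f ξ) (𝓝[>] 0)
        (𝓝 (∫ ξ, symmDiffQuot f ξ)) ∧
      Tendsto (fun η : ℝ => ∫ ξ : ℝ, ((η : ℂ) + I * ξ)⁻¹ • f ξ) (𝓝[>] 0)
        (𝓝 (Real.pi • f 0 - I • ∫ ξ, symmDiffQuot f ξ)) := by
  refine ⟨tendsto_setIntegral_inv_smul hf hquot, ?_⟩
  have hpoisson := tendsto_integral_halfPlanePoissonKernel_smul hf hf₀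
  have hconj := isOddApproxInv_conjPoissonKernel.tendsto_integral_smul hf
    (integrable_symmDiffQuot hf hquot)
  refine (hpoisson.sub (hconj.const_smul I)).congr' ?_
  filter_upwards [self_mem_nhdsWithin] with η hη using (integral_inv_add_I_mul_smul hf hη).symm

end CauchyKernel

/-- **Sokhotski–Plemelj limit.** For a Schwartz function `f : ℝ → ℂ`, the
principal value `PV∫ f(ξ)/ξ dξ = lim_{δ→0⁺} ∫_{|ξ|≥δ} f(ξ)/ξ dξ` exists, and
`lim_{η→0⁺} ∫ f(ξ)/(η + iξ) dξ = π f(0) − i PV∫ f(ξ)/ξ dξ`. -/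
theorem sokhotski_plemelj (f : SchwartzMap ℝ ℂ) :
    ∃ L : ℂ,
      Tendsto (fun δ : ℝ => ∫ ξ in {ξ : ℝ | δ ≤ |ξ|}, f ξ / (ξ : ℂ)) (𝓝[>] 0) (𝓝 L) ∧
      Tendsto (fun η : ℝ => ∫ ξ : ℝ, f ξ / ((η : ℂ) + Complex.I * (ξ : ℂ))) (𝓝[>] 0)
        (𝓝 ((Real.pi : ℂ) * f 0 - Complex.I * L)) := by
  refine ⟨∫ ξ, symmDiffQuot f ξ, ?_⟩
  simpa only [div_eq_inv_mul, smul_eq_mul, real_smul, ofReal_inv] using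
    sokhotski_plemelj_general f.integrable f.continuous.continuousAt
      (integrableAtFilter_symmDiffQuot_of_differentiableAt f.integrable.aestronglyMeasurable
        f.differentiableAt)
end
end

section
/- Let k > 0, θ ≥ 0, let Φ : ℝ³ → [0,∞) be a continuous Schwartz function, let ψ : ℝ³ → ℂ be a smooth compactly supported function, and let W̄ : ℝ³ × ℝ³ → ℂ be a Schwartz function. Then lim_{ε→0⁺} ε ∫_{ℝ³} Φ(q) ∫_{ℝ³} | ∫_{ℝ³} ψ(p) · W̄(x, p − θq/(2k)) / (ε + i p·q/k) dp |² dx dq = 0. (This expresses that in three dimensions the first corrector of the multiscale expansion, tested against ψ in the momentum variable, vanishes in the mean-square sense as ε→0, the key point being that |q|⁻² is an integrable singularity in ℝ³.) -/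
open MeasureTheory Complex Filter
open scoped RealInnerProductSpace Topology

noncomputable section

/-!
Interpolating between `‖z‖ ≥ |re z|` and `‖z‖ ≥ |im z|` gives, for every `0 < α ≤ 1`,
`|ε + i p·q/k|⁻¹ ≤ ε^(-α) |p·q/k|^(α-1)`, and the right-hand side is locally integrable in `p`
with integral proportional to `|q|^(α-1)`. The inner integral is therefore
`O(ε^(-α) |q|^(α-1))`, and the full expression is `O(ε^(1-2α) ∫ |Φ(q)| |q|^(2α-2) dq)`. For
`α < 1/2` the prefactor tends to zero, and the singularity at `q = 0` is integrable as soon as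
`2 - 2α` is less than the dimension; `α = 1/4` does in every dimension at least two.
-/

section Interpolation

lemma norm_inv_le_abs_re_rpow_mul_abs_im_rpow {z : ℂ} (hre : z.re ≠ 0) (him : z.im ≠ 0)
    {α : ℝ} (hα₀ : 0 ≤ α) (hα₁ : α ≤ 1) :
    ‖z‖⁻¹ ≤ |z.re| ^ (-α) * |z.im| ^ (α - 1) := by
  have hz : 0 < ‖z‖ := (abs_pos.2 hre).trans_le (abs_re_le_norm z)
  calc ‖z‖⁻¹ = ‖z‖ ^ (-α) * ‖z‖ ^ (α - 1) := by
        rw [← Real.rpow_add hz, ← Real.rpow_neg_one]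
        ring_nf
    _ ≤ |z.re| ^ (-α) * |z.im| ^ (α - 1) := by
        gcongr ?_ * ?_
        · exact Real.rpow_le_rpow_of_nonpos (abs_pos.2 hre) (abs_re_le_norm z) (by linarith)
        · exact Real.rpow_le_rpow_of_nonpos (abs_pos.2 him) (abs_im_le_norm z) (by linarith)

lemma norm_inv_ofReal_add_I_mul_div_le {ε s k : ℝ} (hε : 0 < ε) (hs : s ≠ 0) (hk : k ≠ 0)
    {α : ℝ} (hα₀ : 0 ≤ α) (hα₁ : α ≤ 1) :
    ‖(ε : ℂ) + I * (s : ℂ) / (k : ℂ)‖⁻¹ ≤ ε ^ (-α) * (|s| ^ (α - 1) / |k| ^ (α - 1)) := by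
  have heq : (ε : ℂ) + I * (s : ℂ) / (k : ℂ) = ⟨ε, s / k⟩ := by
    rw [mul_div_assoc, ← ofReal_div, mul_comm, ← mk_eq_add_mul_I]
  rw [heq, ← Real.div_rpow (abs_nonneg s) (abs_nonneg k), ← abs_div, ← abs_of_pos hε]
  simpa only [abs_abs] using
    norm_inv_le_abs_re_rpow_mul_abs_im_rpow (z := ⟨|ε|, s / k⟩) (abs_pos.2 hε.ne').ne'
      (div_ne_zero hs hk) hα₀ hα₁

end Interpolation

section NormSingularity

variable {E G : Type*} [NormedAddCommGroup E] [NormedSpace ℝ E] [FiniteDimensional ℝ E]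
  [MeasurableSpace E] [BorelSpace E] (μ : Measure E) [μ.IsAddHaarMeasure]
  [NormedAddCommGroup G] [NormedSpace ℝ G]

lemma integrableOn_norm_rpow_ball [Nontrivial E] {s : ℝ} (hs : -(Module.finrank ℝ E : ℝ) < s)
    (R : ℝ) : IntegrableOn (fun x : E => ‖x‖ ^ s) (Metric.ball 0 R) μ := by
  rcases le_or_gt R 0 with hR | hR
  · simp [Metric.ball_eq_empty.2 hR]
  have hradial : IntegrableOn (fun r : ℝ => r ^ ((Module.finrank ℝ E : ℝ) - 1 + s))
      (Set.Ioo 0 R) :=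
    (intervalIntegral.integrableOn_Ioo_rpow_iff hR).2 (by linarith)
  refine (integrableOn_fun_norm_addHaar (f := fun r : ℝ => r ^ s) μ).2
    (hradial.congr_fun (fun r hr => ?_) measurableSet_Ioo)
  beta_reduce
  rw [Real.rpow_add hr.1, smul_eq_mul, ← Real.rpow_natCast,
    Nat.cast_pred (Module.finrank_pos (R := ℝ) (M := E))]

lemma integrable_norm_rpow_smul [Nontrivial E] {s : ℝ}
    (hs : -(Module.finrank ℝ E : ℝ) < s) (hs₀ : s ≤ 0)
    {f : E → G} (hf : Integrable f μ) {C : ℝ} (hC : ∀ x, ‖f x‖ ≤ C) :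
    Integrable (fun x => ‖x‖ ^ s • f x) μ := by
  rw [← integrableOn_univ, ← Set.union_compl_self (Metric.ball (0 : E) 1), integrableOn_union]
  constructor
  · exact (integrableOn_norm_rpow_ball μ hs 1).smul_bdd C hf.1.restrict (.of_forall hC)
  · refine hf.integrableOn.bdd_smul 1
      (measurable_norm.pow_const s).aestronglyMeasurable ?_
    filter_upwards [ae_restrict_mem Metric.isOpen_ball.measurableSet.compl] with x hx
    rw [Real.norm_of_nonneg (by positivity)]
    exact Real.rpow_le_one_of_one_le_of_nonpos (by simpa using hx) hs₀

end NormSingularity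

section InnerSingularity

variable {ι : Type*} [Fintype ι] {E : Type*} [NormedAddCommGroup E] [InnerProductSpace ℝ E]
  [FiniteDimensional ℝ E]

lemma exists_linearIsometryEquiv_inner_eq (hι : Module.finrank ℝ E = Fintype.card ι) (i : ι)
    {q : E} (hq : q ≠ 0) :
    ∃ L : E ≃ₗᵢ[ℝ] EuclideanSpace ℝ ι, ∀ p, ⟪p, q⟫ = ‖q‖ * L p i := by
  have hunit : ‖‖q‖⁻¹ • q‖ = 1 := norm_smul_inv_norm (𝕜 := ℝ) hq
  have horth : Orthonormal ℝ (({i} : Set ι).domRestrict fun _ => ‖q‖⁻¹ • q) :=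
    ⟨fun _ => hunit, fun j j' hne => (hne (Subsingleton.elim j j')).elim⟩
  obtain ⟨b, hb⟩ := horth.exists_orthonormalBasis_extension_of_card_eq hι
  refine ⟨b.repr, fun p => ?_⟩
  rw [b.repr_apply_apply, hb i rfl, real_inner_smul_left, real_inner_comm,
    mul_inv_cancel_left₀ (norm_ne_zero_iff.2 hq)]

lemma integrableOn_ball_comp_apply {G : Type*} [NormedAddCommGroup G] {f : ℝ → G} {R : ℝ}
    (hf : IntegrableOn f (Metric.ball 0 R)) (i : ι) :
    IntegrableOn (fun x : EuclideanSpace ℝ ι => f (x i)) (Metric.ball 0 R) := by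
  have : IsFiniteMeasure (volume.restrict (Metric.ball (0 : ℝ) R)) :=
    isFiniteMeasure_restrict.2 measure_ball_lt_top.ne
  have hcube : IntegrableOn (fun x : ι → ℝ => f (x i))
      (Set.univ.pi fun _ => Metric.ball (0 : ℝ) R) := by
    rw [IntegrableOn, volume_pi, Measure.restrict_pi_pi]
    exact integrable_comp_eval (μ := fun _ : ι => volume.restrict (Metric.ball (0 : ℝ) R)) hf
  refine (((PiLp.volume_preserving_ofLp ι).integrableOn_comp_preimage
    (MeasurableEquiv.toLp 2 (ι → ℝ)).symm.measurableEmbedding).2 hcube).mono_set ?_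
  intro x hx j _
  rw [mem_ball_zero_iff] at hx ⊢
  exact (PiLp.norm_apply_le x j).trans_lt hx

variable [MeasurableSpace E] [BorelSpace E]

lemma ae_inner_ne_zero {q : E} (hq : q ≠ 0) : ∀ᵐ p : E, ⟪p, q⟫ ≠ 0 := by
  have hproper : (ℝ ∙ q)ᗮ ≠ ⊤ := by
    rw [Ne, Submodule.orthogonal_eq_top_iff, Submodule.span_singleton_eq_bot]
    exact hq
  filter_upwards [measure_eq_zero_iff_ae_notMem.1
    (Measure.addHaar_submodule volume (ℝ ∙ q)ᗮ hproper)] with p hp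
  exact mt Submodule.mem_orthogonal_singleton_iff_inner_left.2 hp

lemma integrableOn_abs_inner_rpow_ball {s : ℝ} (hs : -1 < s) {q : E} (hq : q ≠ 0) (R : ℝ) :
    IntegrableOn (fun p : E => |⟪p, q⟫| ^ s) (Metric.ball 0 R) := by
  have : Nontrivial E := ⟨q, 0, hq⟩
  let i : Fin (Module.finrank ℝ E) := ⟨0, Module.finrank_pos⟩
  obtain ⟨L, hL⟩ := exists_linearIsometryEquiv_inner_eq
    (Fintype.card_fin (Module.finrank ℝ E)).symm i hq
  have hline : IntegrableOn (fun t : ℝ => |‖q‖ * t| ^ s) (Metric.ball 0 R) := by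
    simp only [abs_mul, Real.mul_rpow (abs_nonneg _) (abs_nonneg _)]
    exact (integrableOn_norm_rpow_ball volume (by simpa using hs) R).const_mul _
  have hball := (L.measurePreserving.integrableOn_comp_preimage
    L.toHomeomorph.measurableEmbedding).2 (integrableOn_ball_comp_apply hline i)
  rw [L.preimage_ball, map_zero] at hball
  simpa only [hL, Function.comp_def] using hball

lemma exists_setIntegral_abs_inner_rpow_ball_eq [Nontrivial E] (s R : ℝ) :
    ∃ C : ℝ, ∀ q : E, q ≠ 0 →
      ∫ p in Metric.ball 0 R, |⟪p, q⟫| ^ s = C * ‖q‖ ^ s := by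
  let i : Fin (Module.finrank ℝ E) := ⟨0, Module.finrank_pos⟩
  refine ⟨∫ x in Metric.ball (0 : EuclideanSpace ℝ (Fin (Module.finrank ℝ E))) R, |x i| ^ s,
    fun q hq => ?_⟩
  obtain ⟨L, hL⟩ := exists_linearIsometryEquiv_inner_eq
    (Fintype.card_fin (Module.finrank ℝ E)).symm i hq
  have hball := L.measurePreserving.setIntegral_preimage_emb L.toHomeomorph.measurableEmbedding
    (fun x => |x i| ^ s) (Metric.ball 0 R)
  rw [L.preimage_ball, map_zero] at hball
  simp only [hL, abs_mul, abs_norm, Real.mul_rpow (norm_nonneg q) (abs_nonneg _)]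
  rw [integral_const_mul, hball, mul_comm]

end InnerSingularity

section ResolventAverage

variable {E : Type*} [NormedAddCommGroup E] [InnerProductSpace ℝ E] [FiniteDimensional ℝ E]
  [MeasurableSpace E] [BorelSpace E]

/-- The average over momenta `p` of an amplitude `a` against the symbol `(ε + i p·q/k)⁻¹` of the
regularized inverse of the transport operator. It is the first corrector tested in momentum when
`a p = ψ p * W̄(x, p - θq/(2k))`. -/
def resolventAverage (ε k : ℝ) (a : E → ℂ) (q : E) : ℂ :=
  ∫ p, a p / ((ε : ℂ) + I * (⟪p, q⟫ : ℂ) / (k : ℂ))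

lemma exists_norm_resolventAverage_le [Nontrivial E] {k : ℝ} (hk : k ≠ 0) (R : ℝ)
    {α : ℝ} (hα₀ : 0 < α) (hα₁ : α ≤ 1) :
    ∃ C : ℝ, ∀ ε > 0, ∀ q ≠ 0, ∀ (a : E → ℂ) (M : ℝ), (∀ p, ‖a p‖ ≤ M) →
      (∀ p ∉ Metric.ball 0 R, a p = 0) →
      ‖resolventAverage ε k a q‖ ≤ C * (M * (ε ^ (-α) * ‖q‖ ^ (α - 1))) := by
  obtain ⟨C, hC⟩ := exists_setIntegral_abs_inner_rpow_ball_eq (E := E) (α - 1) R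
  refine ⟨C / |k| ^ (α - 1), fun ε hε q hq a M hM hsupp => ?_⟩
  let c := M * (ε ^ (-α) / |k| ^ (α - 1))
  have hpointwise : ∀ᵐ p, ‖a p / ((ε : ℂ) + I * (⟪p, q⟫ : ℂ) / (k : ℂ))‖ ≤
      c * |⟪p, q⟫| ^ (α - 1) := by
    filter_upwards [ae_inner_ne_zero hq] with p hp
    calc ‖a p / ((ε : ℂ) + I * (⟪p, q⟫ : ℂ) / (k : ℂ))‖
        = ‖a p‖ * ‖(ε : ℂ) + I * (⟪p, q⟫ : ℂ) / (k : ℂ)‖⁻¹ := by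
          rw [norm_div, div_eq_mul_inv]
      _ ≤ M * (ε ^ (-α) * (|⟪p, q⟫| ^ (α - 1) / |k| ^ (α - 1))) := by
          have hM₀ : 0 ≤ M := (norm_nonneg _).trans (hM p)
          gcongr
          · exact hM p
          · exact norm_inv_ofReal_add_I_mul_div_le hε hp hk hα₀.le hα₁
      _ = c * |⟪p, q⟫| ^ (α - 1) := by ring
  have hball : resolventAverage ε k a q =
      ∫ p in Metric.ball 0 R, a p / ((ε : ℂ) + I * (⟪p, q⟫ : ℂ) / (k : ℂ)) :=
    (setIntegral_eq_integral_of_forall_compl_eq_zero fun p hp => by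
      rw [hsupp p hp, zero_div]).symm
  calc ‖resolventAverage ε k a q‖
      ≤ ∫ p in Metric.ball 0 R, c * |⟪p, q⟫| ^ (α - 1) := by
        rw [hball]
        exact norm_integral_le_of_norm_le
          ((integrableOn_abs_inner_rpow_ball (by linarith) hq R).const_mul c)
          (ae_restrict_of_ae hpointwise)
    _ = C / |k| ^ (α - 1) * (M * (ε ^ (-α) * ‖q‖ ^ (α - 1))) := by
        rw [integral_const_mul, hC q hq]
        ring

variable {X : Type*} [MeasurableSpace X] {μ : Measure X}

lemma exists_integral_norm_resolventAverage_sq_le [Nontrivial E] {k : ℝ} (hk : k ≠ 0) (R : ℝ)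
    {α : ℝ} (hα₀ : 0 < α) (hα₁ : α ≤ 1) {g : X → ℝ} (hg : Integrable (fun x => g x ^ 2) μ) :
    ∃ C : ℝ, ∀ ε > 0, ∀ q ≠ 0, ∀ a : X → E → ℂ, (∀ x p, ‖a x p‖ ≤ g x) →
      (∀ x, ∀ p ∉ Metric.ball 0 R, a x p = 0) →
      ∫ x, ‖resolventAverage ε k (a x) q‖ ^ 2 ∂μ ≤
        C * (ε ^ (-(2 * α)) * ‖q‖ ^ (2 * α - 2)) := by
  obtain ⟨C, hC⟩ := exists_norm_resolventAverage_le (E := E) hk R hα₀ hα₁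
  refine ⟨C ^ 2 * ∫ x, g x ^ 2 ∂μ, fun ε hε q hq a hag hsupp => ?_⟩
  have hε_sq : (ε ^ (-α)) ^ 2 = ε ^ (-(2 * α)) := by
    rw [← Real.rpow_mul_natCast hε.le]
    ring_nf
  have hq_sq : (‖q‖ ^ (α - 1)) ^ 2 = ‖q‖ ^ (2 * α - 2) := by
    rw [← Real.rpow_mul_natCast (norm_nonneg q)]
    ring_nf
  calc ∫ x, ‖resolventAverage ε k (a x) q‖ ^ 2 ∂μ
      ≤ ∫ x, (C * (ε ^ (-α) * ‖q‖ ^ (α - 1))) ^ 2 * g x ^ 2 ∂μ := by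
        refine integral_mono_of_nonneg (.of_forall fun x => by positivity) (hg.const_mul _)
          (.of_forall fun x => ?_)
        calc ‖resolventAverage ε k (a x) q‖ ^ 2
            ≤ (C * (g x * (ε ^ (-α) * ‖q‖ ^ (α - 1)))) ^ 2 := by
              gcongr
              exact hC ε hε q hq (a x) (g x) (hag x) (hsupp x)
          _ = (C * (ε ^ (-α) * ‖q‖ ^ (α - 1))) ^ 2 * g x ^ 2 := by ring
    _ = (C ^ 2 * ∫ x, g x ^ 2 ∂μ) * (ε ^ (-(2 * α)) * ‖q‖ ^ (2 * α - 2)) := by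
        rw [integral_const_mul, ← hε_sq, ← hq_sq]
        ring

lemma exists_norm_integral_mul_integral_norm_resolventAverage_sq_le
    (hE : 2 ≤ Module.finrank ℝ E) {k : ℝ} (hk : k ≠ 0) {α : ℝ} (hα₀ : 0 < α) (hα₁ : α ≤ 1)
    {Φ : E → ℝ} (hΦ : Integrable Φ) {B : ℝ} (hΦB : ∀ q, ‖Φ q‖ ≤ B)
    {a : E → X → E → ℂ} {g : X → ℝ} (hg : Integrable (fun x => g x ^ 2) μ)
    (hag : ∀ q x p, ‖a q x p‖ ≤ g x) {R : ℝ}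
    (hsupp : ∀ q x, ∀ p ∉ Metric.ball 0 R, a q x p = 0) :
    ∃ C : ℝ, ∀ ε > 0,
      ‖∫ q, Φ q * ∫ x, ‖resolventAverage ε k (a q x) q‖ ^ 2 ∂μ‖ ≤ C * ε ^ (-(2 * α)) := by
  have : Nontrivial E := Module.nontrivial_of_finrank_pos (R := ℝ) (by omega)
  have hdim : (2 : ℝ) ≤ Module.finrank ℝ E := mod_cast hE
  have hsing : Integrable fun q => ‖q‖ ^ (2 * α - 2) • ‖Φ q‖ :=
    integrable_norm_rpow_smul volume (by linarith) (by linarith) hΦ.norm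
      fun q => (norm_norm (Φ q)).trans_le (hΦB q)
  obtain ⟨C, hC⟩ := exists_integral_norm_resolventAverage_sq_le (E := E) hk R hα₀ hα₁ hg
  refine ⟨C * ∫ q, ‖q‖ ^ (2 * α - 2) • ‖Φ q‖, fun ε hε => ?_⟩
  calc ‖∫ q, Φ q * ∫ x, ‖resolventAverage ε k (a q x) q‖ ^ 2 ∂μ‖
      ≤ ∫ q, C * ε ^ (-(2 * α)) * (‖q‖ ^ (2 * α - 2) • ‖Φ q‖) := by
        refine norm_integral_le_of_norm_le (hsing.const_mul _) ?_
        filter_upwards [Measure.ae_ne volume (0 : E)] with q hq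
        rw [norm_mul, Real.norm_of_nonneg (integral_nonneg fun x => by positivity)]
        calc ‖Φ q‖ * ∫ x, ‖resolventAverage ε k (a q x) q‖ ^ 2 ∂μ
            ≤ ‖Φ q‖ * (C * (ε ^ (-(2 * α)) * ‖q‖ ^ (2 * α - 2))) := by
              gcongr
              exact hC ε hε q hq (a q) (hag q) (hsupp q)
          _ = C * ε ^ (-(2 * α)) * (‖q‖ ^ (2 * α - 2) • ‖Φ q‖) := by
              rw [smul_eq_mul]
              ring
    _ = (C * ∫ q, ‖q‖ ^ (2 * α - 2) • ‖Φ q‖) * ε ^ (-(2 * α)) := by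
        rw [integral_const_mul]
        ring

lemma tendsto_mul_integral_mul_integral_norm_resolventAverage_sq
    (hE : 2 ≤ Module.finrank ℝ E) {k : ℝ} (hk : k ≠ 0)
    {Φ : E → ℝ} (hΦ : Integrable Φ) {B : ℝ} (hΦB : ∀ q, ‖Φ q‖ ≤ B)
    {a : E → X → E → ℂ} {g : X → ℝ} (hg : Integrable (fun x => g x ^ 2) μ)
    (hag : ∀ q x p, ‖a q x p‖ ≤ g x) {R : ℝ}
    (hsupp : ∀ q x, ∀ p ∉ Metric.ball 0 R, a q x p = 0) :
    Tendsto (fun ε => ε * ∫ q, Φ q * ∫ x, ‖resolventAverage ε k (a q x) q‖ ^ 2 ∂μ)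
      (𝓝[>] 0) (𝓝 0) := by
  obtain ⟨C, hC⟩ := exists_norm_integral_mul_integral_norm_resolventAverage_sq_le hE hk
    (α := 1 / 4) (by norm_num) (by norm_num) hΦ hΦB hg hag hsupp
  have hlim : Tendsto (fun ε : ℝ => C * ε ^ (1 / 2 : ℝ)) (𝓝[>] 0) (𝓝 0) := by
    have h := ((Real.continuous_rpow_const (q := 1 / 2) (by norm_num)).const_mul C).tendsto 0
    rw [Real.zero_rpow (by norm_num), mul_zero] at h
    exact h.mono_left nhdsWithin_le_nhds
  refine squeeze_zero_norm' ?_ hlim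
  filter_upwards [self_mem_nhdsWithin] with ε (hε : 0 < ε)
  calc ‖ε * ∫ q, Φ q * ∫ x, ‖resolventAverage ε k (a q x) q‖ ^ 2 ∂μ‖
      ≤ ε * (C * ε ^ (-(2 * (1 / 4)) : ℝ)) := by
        rw [norm_mul, Real.norm_of_nonneg hε.le]
        gcongr
        exact hC ε hε
    _ = C * (ε ^ (1 : ℝ) * ε ^ (-(2 * (1 / 4)) : ℝ)) := by
        rw [Real.rpow_one]
        ring
    _ = C * ε ^ (1 / 2 : ℝ) := by
        rw [← Real.rpow_add hε]
        norm_num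

end ResolventAverage

section SchwartzDecay

variable {E F G : Type*} [NormedAddCommGroup E] [NormedSpace ℝ E]
  [NormedAddCommGroup F] [NormedSpace ℝ F] [NormedAddCommGroup G] [NormedSpace ℝ G]

lemma schwartzMap_exists_norm_apply_le (f : SchwartzMap E G) (n : ℕ) :
    ∃ C : ℝ, 0 ≤ C ∧ ∀ x, ‖f x‖ ≤ C * (1 + ‖x‖) ^ (-(n : ℝ)) := by
  refine ⟨2 ^ n * (Finset.Iic (n, 0)).sup (fun m => SchwartzMap.seminorm ℝ m.1 m.2) f,
    by positivity, fun x => ?_⟩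
  rw [Real.rpow_neg (by positivity), Real.rpow_natCast, ← div_eq_mul_inv,
    le_div_iff₀ (by positivity), mul_comm]
  simpa only [norm_iteratedFDeriv_zero] using
    SchwartzMap.one_add_le_sup_seminorm_apply (𝕜 := ℝ) (m := (n, 0)) le_rfl le_rfl f x

lemma schwartzMap_exists_integrable_sq_norm_prod_le [MeasurableSpace F] (μ : Measure F)
    [μ.HasTemperateGrowth] (f : SchwartzMap (F × E) G) :
    ∃ g : F → ℝ, Integrable (fun x => g x ^ 2) μ ∧ ∀ x p, ‖f (x, p)‖ ≤ g x := by
  obtain ⟨C, hC₀, hC⟩ := schwartzMap_exists_norm_apply_le f μ.integrablePower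
  have hint := μ.integrable_pow_neg_integrablePower
  refine ⟨fun x => C * (1 + ‖x‖) ^ (-(μ.integrablePower : ℝ)), ?_, fun x p => ?_⟩
  · simp only [mul_pow, sq ((1 + ‖_‖) ^ (_ : ℝ))]
    refine (hint.mul_bdd (c := 1) hint.aestronglyMeasurable (.of_forall fun x => ?_)).const_mul _
    rw [Real.norm_of_nonneg (by positivity)]
    exact Real.rpow_le_one_of_one_le_of_nonpos (by simp) (by simp)
  · refine (hC (x, p)).trans (mul_le_mul_of_nonneg_left ?_ hC₀)
    refine Real.rpow_le_rpow_of_nonpos (by positivity) ?_ (by simp)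
    gcongr
    exact norm_fst_le (x, p)

end SchwartzDecay

theorem corrector_weak_vanishing_general {E F : Type*}
    [NormedAddCommGroup E] [InnerProductSpace ℝ E] [FiniteDimensional ℝ E]
    [MeasurableSpace E] [BorelSpace E] (hE : 2 ≤ Module.finrank ℝ E)
    [NormedAddCommGroup F] [NormedSpace ℝ F] [FiniteDimensional ℝ F]
    [MeasurableSpace F] [BorelSpace F] (μ : Measure F) [μ.IsAddHaarMeasure]
    {k : ℝ} (hk : k ≠ 0) (θ : ℝ)
    {Φ : E → ℝ} (hΦ : Integrable Φ) {B : ℝ} (hΦB : ∀ q, ‖Φ q‖ ≤ B)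
    {ψ : E → ℂ} (hψ : Continuous ψ) (hψc : HasCompactSupport ψ)
    (Wb : SchwartzMap (F × E) ℂ) :
    Tendsto
      (fun ε : ℝ => ε * ∫ q, Φ q * ∫ x,
        ‖∫ p, ψ p * Wb (x, p - (θ / (2 * k)) • q) /
            ((ε : ℂ) + I * (⟪p, q⟫ : ℂ) / (k : ℂ))‖ ^ 2 ∂μ)
      (𝓝[>] 0) (𝓝 0) := by
  obtain ⟨M, hM⟩ := hψ.bounded_above_of_compact_support hψc
  obtain ⟨R, hR⟩ := hψc.isCompact.isBounded.subset_ball 0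
  obtain ⟨g, hg, hWg⟩ := schwartzMap_exists_integrable_sq_norm_prod_le μ Wb
  refine tendsto_mul_integral_mul_integral_norm_resolventAverage_sq hE hk hΦ hΦB
    (g := fun x => M * g x) (R := R) ?_ (fun q x p => ?_) (fun q x p hp => ?_)
  · simpa only [mul_pow] using hg.const_mul (M ^ 2)
  · rw [norm_mul]
    exact mul_le_mul (hM p) (hWg x _) (norm_nonneg _) ((norm_nonneg _).trans (hM p))
  · rw [image_eq_zero_of_notMem_tsupport fun h => hp (hR h), zero_mul]

/-- Weak vanishing of the first corrector in three dimensions: for `k > 0`,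
`θ ≥ 0`, a nonnegative Schwartz `Φ`, a smooth compactly supported test function `ψ`, and
Schwartz `W̄`,
`lim_{ε→0⁺} ε ∫ Φ(q) ∫ |∫ ψ(p) W̄(x, p − θq/(2k))/(ε + i p·q/k) dp|² dx dq = 0`. -/
theorem corrector_weak_vanishing
    (k θ : ℝ) (hk : 0 < k) (hθ : 0 ≤ θ)
    (Φ : SchwartzMap (EuclideanSpace ℝ (Fin 3)) ℝ) (hΦ : ∀ q, 0 ≤ Φ q)
    (ψ : EuclideanSpace ℝ (Fin 3) → ℂ)
    (hψs : ContDiff ℝ (⊤ : ℕ∞) ψ) (hψc : HasCompactSupport ψ)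
    (Wb : SchwartzMap (EuclideanSpace ℝ (Fin 3) × EuclideanSpace ℝ (Fin 3)) ℂ) :
    Tendsto
      (fun ε : ℝ =>
        ε * ∫ q : EuclideanSpace ℝ (Fin 3),
          Φ q *
            ∫ x : EuclideanSpace ℝ (Fin 3),
              ‖∫ p : EuclideanSpace ℝ (Fin 3),
                  ψ p * Wb (x, p - (θ / (2 * k)) • q) /
                    ((ε : ℂ) + Complex.I * (⟪p, q⟫ : ℂ) / (k : ℂ))‖ ^ 2)
      (𝓝[>] 0) (𝓝 0) :=
  corrector_weak_vanishing_general (by simp) volume hk.ne' θ Φ.integrable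
    (Φ.norm_le_seminorm ℝ) hψs.continuous hψc Wb
end
end

section
/- Let ν₀ ∈ ℂ, β ∈ ℝ, and let W : ℝ × ℝ² × ℝ² → ℂ, (z,x,p) ↦ W(z,x,p), and F : ℝ × ℝ² × ℝ² → ℂ be smooth functions that are Schwartz in (x,p) uniformly on compact z-intervals. Suppose W satisfies, for all (z,x,p), the paraxial two-frequency transport equation ∂_z W + p·∇ₓW + iν₀ W − F = Δ_p W − 2iβ (x·∇_p W) − β²|x|² W (i.e. ∂_z W + p·∇ₓW + iν₀W − F = (∇_p − iβx)·(∇_p − iβx)W). Define Γ(z,x,y) = ∫_{ℝ²} W(z,x,p) e^{i p·y} dp and F̂(z,x,y) = ∫_{ℝ²} F(z,x,p) e^{i p·y} dp. Then Γ satisfies, for all (z,x,y), the two-frequency mutual coherence equation ∂_z Γ − i ∑_{j=1}^{2} ∂²Γ/∂y_j∂x_j + iν₀ Γ − F̂ = −|y + βx|² Γ. -/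
open MeasureTheory Complex Filter
open scoped RealInnerProductSpace Topology

noncomputable section

/-!
The transform `f ↦ ∫ e^{i p·y} f(p) dp` turns `∇_p` into `-i y`, so that `(∇_p - iβx)·(∇_p - iβx)`
becomes multiplication by `-|y + βx|²`, and turns multiplication by `p` into `-i ∇_y`, so that
`p·∇ₓ` becomes `-i ∇_y·∇ₓ`. The transport equation expresses `∂_z W` as a continuous linear image of
`W` plus `F`; since continuous linear maps preserve bounded sets of Schwartz functions, `∂_z W` is
Schwartz in `p` uniformly for `z` near any given point, which allows `∂_z` to pass under the
integral.
-/

open Bornology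
open scoped SchwartzMap FourierTransform LineDeriv Laplacian

section Boundedness

variable {D G P : Type*} [NormedAddCommGroup D] [NormedSpace ℝ D]
  [NormedAddCommGroup G] [NormedSpace ℝ G]

lemma isVonNBounded_image_schwartz_iff {S : P → 𝓢(D, G)} {K : Set P} :
    IsVonNBounded ℝ (S '' K) ↔
      ∀ k n : ℕ, ∃ C : ℝ, ∀ z ∈ K, SchwartzMap.seminorm ℝ k n (S z) ≤ C := by
  simp only [(schwartz_withSeminorms ℝ D G).isVonNBounded_iff_seminorm_bddAbove, Prod.forall,
    bddAbove_def, Set.forall_mem_image, SchwartzMap.schwartzSeminormFamily_apply]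

lemma exists_norm_le_mul_rpow_neg_of_isVonNBounded {B : Set 𝓢(D, G)} (hB : IsVonNBounded ℝ B)
    (k : ℕ) :
    ∃ C : ℝ, 0 ≤ C ∧ ∀ f ∈ B, ∀ q, ‖f q‖ ≤ C * (1 + ‖q‖) ^ (-(k : ℝ)) := by
  obtain ⟨r, hr_pos, hr⟩ :=
    (schwartz_withSeminorms ℝ D G).isVonNBounded_iff_finset_seminorm_bounded.1 hB
      (Finset.Iic (k, 0))
  refine ⟨2 ^ k * r, by positivity, fun f hf q ↦ ?_⟩
  have hdecay : (1 + ‖q‖) ^ k * ‖f q‖ ≤ 2 ^ k * r := by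
    simpa only [norm_iteratedFDeriv_zero] using
      (SchwartzMap.one_add_le_sup_seminorm_apply (𝕜 := ℝ) (m := (k, 0)) le_rfl le_rfl f q).trans
        (mul_le_mul_of_nonneg_left (hr f hf).le (by positivity))
  rw [Real.rpow_neg (by positivity), Real.rpow_natCast, ← div_eq_mul_inv,
    le_div_iff₀ (by positivity), mul_comm]
  exact hdecay

end Boundedness

section FourierInv

variable {E G : Type*} [NormedAddCommGroup E] [InnerProductSpace ℝ E] [FiniteDimensional ℝ E]
  [MeasurableSpace E] [BorelSpace E] [NormedAddCommGroup G] [NormedSpace ℂ G]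

/-- The unnormalised inverse Fourier transform `f ↦ ∫ e^{i p·y} f(p) dp` at the point `y`, as a
continuous linear functional on Schwartz space. Mathlib's `𝓕⁻` has the kernel `e^{2πi p·y}`, hence
the rescaling of `y` by `(2π)⁻¹`. -/
def angularFourierInv (y : E) : 𝓢(E, G) →L[ℂ] G :=
  BoundedContinuousFunction.evalCLM ℂ ((2 * Real.pi)⁻¹ • y) ∘L
    SchwartzMap.toBoundedContinuousFunctionCLM ℂ E G ∘L
    FourierTransform.fourierInvCLM ℂ 𝓢(E, G)

lemma angularFourierInv_eq_fourierInv (f : 𝓢(E, G)) (y : E) :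
    angularFourierInv y f = 𝓕⁻ f ((2 * Real.pi)⁻¹ • y) :=
  rfl

lemma angularFourierInv_apply (f : 𝓢(E, G)) (y : E) :
    angularFourierInv y f = ∫ p, cexp (I * (⟪p, y⟫ : ℂ)) • f p := by
  rw [angularFourierInv_eq_fourierInv, SchwartzMap.fourierInv_coe, Real.fourierInv_eq']
  congr! 4 with p
  rw [inner_smul_right, mul_inv_cancel_left₀ Real.two_pi_pos.ne', mul_comm]

lemma integrable_cexp_inner_smul (f : 𝓢(E, G)) (y : E) :
    Integrable fun p ↦ cexp (I * (⟪p, y⟫ : ℂ)) • f p := by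
  refine f.integrable.bdd_smul 1 (by fun_prop) (.of_forall fun p ↦ ?_)
  rw [mul_comm, norm_exp_ofReal_mul_I]

lemma angularFourierInv_lineDeriv (f : 𝓢(E, G)) (y v : E) :
    angularFourierInv y (∂_{v} f) = -(I * (⟪y, v⟫ : ℂ)) • angularFourierInv y f := by
  simp only [angularFourierInv_eq_fourierInv, SchwartzMap.fourierInv_lineDerivOp_eq]
  have hgrowth : (inner ℝ · v : E → ℝ).HasTemperateGrowth := by fun_prop
  rw [_root_.smul_apply, SchwartzMap.smulLeftCLM_apply_apply hgrowth, ← Complex.coe_smul,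
    smul_smul, real_inner_smul_left]
  congr 1
  push_cast
  field_simp

lemma angularFourierInv_laplacian (f : 𝓢(E, G)) (y : E) :
    angularFourierInv y (Δ f) = -((‖y‖ ^ 2 : ℝ) : ℂ) • angularFourierInv y f := by
  rw [SchwartzMap.laplacian_eq_sum (stdOrthonormalBasis ℝ E), map_sum,
    ← (stdOrthonormalBasis ℝ E).sum_sq_inner_left y]
  simp only [angularFourierInv_lineDeriv, smul_smul, ← Finset.sum_smul]
  congr 1
  push_cast
  rw [← Finset.sum_neg_distrib]
  refine Finset.sum_congr rfl fun j _ ↦ ?_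
  linear_combination (⟪y, stdOrthonormalBasis ℝ E j⟫ : ℂ) ^ 2 * I_sq

lemma fderiv_angularFourierInv (f : 𝓢(E, G)) (y v : E) :
    fderiv ℝ (fun y' ↦ angularFourierInv y' f) y v =
      I • angularFourierInv y (SchwartzMap.smulLeftCLM G (inner ℝ · v) f) := by
  have hderiv := ((𝓕⁻ f).differentiableAt.hasFDerivAt).comp y
    ((hasFDerivAt_id y).const_smul (2 * Real.pi)⁻¹)
  refine (congrArg (· v) hderiv.fderiv).trans ?_
  rw [ContinuousLinearMap.comp_smul, ContinuousLinearMap.comp_id, _root_.smul_apply,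
    ← SchwartzMap.lineDerivOp_apply_eq_fderiv, SchwartzMap.lineDerivOp_fourierInv_eq,
    FourierTransform.fourierInv_smul, _root_.smul_apply, ← Complex.coe_smul, smul_smul,
    angularFourierInv_eq_fourierInv]
  congr 1
  push_cast
  field_simp

lemma hasDerivAt_angularFourierInv {S D : ℝ → 𝓢(E, G)} {z : ℝ} {K : Set ℝ} (hK : K ∈ 𝓝 z)
    (hD : IsVonNBounded ℝ (D '' K))
    (hS : ∀ z' ∈ K, ∀ p, HasDerivAt (fun t ↦ S t p) (D z' p) z') (y : E) :
    HasDerivAt (fun t ↦ angularFourierInv y (S t)) (angularFourierInv y (D z)) z := by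
  obtain ⟨C, -, hC⟩ := exists_norm_le_mul_rpow_neg_of_isVonNBounded hD
    (volume : Measure E).integrablePower
  simp only [angularFourierInv_apply]
  refine (hasDerivAt_integral_of_dominated_loc_of_deriv_le hK
    (.of_forall fun t ↦ (integrable_cexp_inner_smul (S t) y).aestronglyMeasurable)
    (integrable_cexp_inner_smul (S z) y)
    (integrable_cexp_inner_smul (D z) y).aestronglyMeasurable
    (.of_forall fun p t ht ↦ ?_)
    ((Measure.integrable_pow_neg_integrablePower volume).const_mul C)
    (.of_forall fun p t ht ↦ (hS t ht p).const_smul _)).2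
  rw [norm_smul, mul_comm I, norm_exp_ofReal_mul_I, one_mul]
  exact hC _ (Set.mem_image_of_mem D ht) p

end FourierInv

section Slice

variable {X E G : Type*} [NormedAddCommGroup X] [NormedSpace ℝ X] [NormedAddCommGroup E]
  [NormedSpace ℝ E] [NormedAddCommGroup G] [NormedSpace ℝ G]

lemma hasTemperateGrowth_prodMk_right (x : X) :
    (fun p : E ↦ (x, p)).HasTemperateGrowth := by
  convert (Function.HasTemperateGrowth.const (x, (0 : E))).add
    (ContinuousLinearMap.inr ℝ X E).hasTemperateGrowth using 1
  ext p <;> simp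

/-- Restriction `p ↦ f (x, p)` of a Schwartz function on `X × E` to the slice `{x} × E`. -/
def schwartzSlice (x : X) : 𝓢(X × E, G) →L[ℝ] 𝓢(E, G) :=
  SchwartzMap.compCLMOfAntilipschitz ℝ (K := 1) (hasTemperateGrowth_prodMk_right x)
    (AntilipschitzWith.of_le_mul_dist fun p q ↦ by simp [Prod.dist_eq])

lemma schwartzSlice_apply (x : X) (f : 𝓢(X × E, G)) (p : E) : schwartzSlice x f p = f (x, p) :=
  rfl

/-- The partial Fréchet derivative of a Schwartz function on `X × E` in its first variable, again as
a Schwartz function, so that its decay in both variables is available. -/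
def schwartzFDerivLeft : 𝓢(X × E, G) →L[ℝ] 𝓢(X × E, X →L[ℝ] G) :=
  SchwartzMap.postcompCLM ((ContinuousLinearMap.compL ℝ X (X × E) G).flip
    (ContinuousLinearMap.inl ℝ X E)) ∘L SchwartzMap.fderivCLM ℝ (X × E) G

lemma hasFDerivAt_schwartz_left (f : 𝓢(X × E, G)) (x : X) (p : E) :
    HasFDerivAt (fun x' ↦ f (x', p)) (schwartzFDerivLeft f (x, p)) x :=
  HasFDerivAt.comp x f.differentiableAt.hasFDerivAt (hasFDerivAt_prodMk_left x p)

lemma schwartzFDerivLeft_apply_apply (f : 𝓢(X × E, G)) (q : X × E) (v : X) :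
    schwartzFDerivLeft f q v = (∂_{((v, 0) : X × E)} f) q := by
  rw [SchwartzMap.lineDerivOp_apply_eq_fderiv]
  rfl

end Slice

section Advection

variable {E G ι : Type*} [NormedAddCommGroup E] [InnerProductSpace ℝ E] [NormedAddCommGroup G]
  [NormedSpace ℝ G] [Fintype ι]

/-- The transport term `p ↦ p·∇ₓ f (x, p)` at a fixed position `x`, as a Schwartz function of the
momentum `p`; it is expanded in the basis `b` so as to be visibly continuous in `f`. -/
def schwartzAdvection (b : OrthonormalBasis ι ℝ E) (x : E) : 𝓢(E × E, G) →L[ℝ] 𝓢(E, G) :=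
  ∑ j, SchwartzMap.smulLeftCLM G (inner ℝ · (b j)) ∘L schwartzSlice x ∘L
    LineDeriv.lineDerivOpCLM ℝ 𝓢(E × E, G) ((b j, 0) : E × E)

lemma schwartzAdvection_eq_sum (b : OrthonormalBasis ι ℝ E) (x : E) (f : 𝓢(E × E, G)) :
    schwartzAdvection b x f =
      ∑ j, SchwartzMap.smulLeftCLM G (inner ℝ · (b j))
        (schwartzSlice x (∂_{((b j, 0) : E × E)} f)) :=
  _root_.sum_apply _ _ _

lemma schwartzAdvection_apply (b : OrthonormalBasis ι ℝ E) (x : E) (f : 𝓢(E × E, G)) (p : E) :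
    schwartzAdvection b x f p = fderiv ℝ (fun x' ↦ f (x', p)) x p := by
  have hgrowth (j : ι) : (inner ℝ · (b j) : E → ℝ).HasTemperateGrowth := by fun_prop
  rw [(hasFDerivAt_schwartz_left f x p).fderiv, schwartzAdvection_eq_sum, _root_.sum_apply]
  conv_rhs => arg 2; rw [← b.sum_repr' p]
  rw [map_sum]
  refine Finset.sum_congr rfl fun j _ ↦ ?_
  rw [SchwartzMap.smulLeftCLM_apply_apply (hgrowth j), schwartzSlice_apply, map_smul,
    schwartzFDerivLeft_apply_apply, real_inner_comm]

end Advection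

section Generator

variable {E G ι : Type*} [NormedAddCommGroup E] [InnerProductSpace ℝ E] [FiniteDimensional ℝ E]
  [NormedAddCommGroup G] [NormedSpace ℂ G] [Fintype ι]

/-- The Laplacian `(∇ - i a)·(∇ - i a) = Δ - 2i ∂_a - |a|²` with constant magnetic potential `a`,
acting on Schwartz functions. -/
def magneticLaplacian (a : E) : 𝓢(E, G) →L[ℝ] 𝓢(E, G) :=
  LineDeriv.laplacianCLM ℝ E 𝓢(E, G) - (2 * I) • LineDeriv.lineDerivOpCLM ℝ 𝓢(E, G) a
    - ‖a‖ ^ 2 • ContinuousLinearMap.id ℝ 𝓢(E, G)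

lemma magneticLaplacian_eq (a : E) (f : 𝓢(E, G)) :
    magneticLaplacian a f = Δ f - (2 * I) • ∂_{a} f - ((‖a‖ ^ 2 : ℝ) : ℂ) • f :=
  rfl

lemma magneticLaplacian_apply (b : OrthonormalBasis ι ℝ E) (a : E) (f : 𝓢(E, G)) (p : E) :
    magneticLaplacian a f p =
      (∑ j, fderiv ℝ (fun p' ↦ fderiv ℝ f p' (b j)) p (b j)) - (2 * I) • fderiv ℝ f p a
        - ((‖a‖ ^ 2 : ℝ) : ℂ) • f p := by
  rw [magneticLaplacian_eq, SchwartzMap.laplacian_eq_sum b]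
  simp only [_root_.sub_apply, _root_.smul_apply, _root_.sum_apply,
    SchwartzMap.lineDerivOp_apply_eq_fderiv]
  rfl

/-- The right-hand side `(∇_p - iβx)·(∇_p - iβx) f - p·∇ₓ f - iν₀ f` of the source-free transport
equation solved for `∂_z`, at a fixed position `x`, as a Schwartz function of `p`. -/
def paraxialGenerator (b : OrthonormalBasis ι ℝ E) (ν₀ : ℂ) (β : ℝ) (x : E) :
    𝓢(E × E, G) →L[ℝ] 𝓢(E, G) :=
  magneticLaplacian (β • x) ∘L schwartzSlice x - schwartzAdvection b x
    - (I * ν₀) • schwartzSlice x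

lemma paraxialGenerator_eq (b : OrthonormalBasis ι ℝ E) (ν₀ : ℂ) (β : ℝ) (x : E)
    (f : 𝓢(E × E, G)) :
    paraxialGenerator b ν₀ β x f = magneticLaplacian (β • x) (schwartzSlice x f)
      - schwartzAdvection b x f - (I * ν₀) • schwartzSlice x f :=
  rfl

lemma deriv_eq_paraxialGenerator_add {b : OrthonormalBasis ι ℝ E} {ν₀ : ℂ} {β : ℝ}
    {W F : ℝ → 𝓢(E × E, G)} {z : ℝ} {x p : E}
    (heq : deriv (fun z' ↦ W z' (x, p)) z + fderiv ℝ (fun x' ↦ W z (x', p)) x p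
        + (I * ν₀) • W z (x, p) - F z (x, p) =
      (∑ j, fderiv ℝ (fun p' ↦ fderiv ℝ (fun p'' ↦ W z (x, p'')) p' (b j)) p (b j))
        - (2 * I * β) • fderiv ℝ (fun p' ↦ W z (x, p')) p x
        - ((β ^ 2 * ‖x‖ ^ 2 : ℝ) : ℂ) • W z (x, p)) :
    deriv (fun z' ↦ W z' (x, p)) z =
      (paraxialGenerator b ν₀ β x (W z) + schwartzSlice x (F z)) p := by
  have hmagnetic := magneticLaplacian_apply b (β • x) (schwartzSlice x (W z)) p
  rw [map_smul, ← Complex.coe_smul, smul_smul, norm_smul, mul_pow, Real.norm_eq_abs, sq_abs]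
    at hmagnetic
  rw [_root_.add_apply, paraxialGenerator_eq, _root_.sub_apply, _root_.sub_apply,
    _root_.smul_apply, schwartzAdvection_apply, ← heq.trans hmagnetic.symm, schwartzSlice_apply,
    schwartzSlice_apply]
  abel

end Generator

section MomentumTransform

variable {X E G ι : Type*} [NormedAddCommGroup X] [NormedSpace ℝ X] [NormedAddCommGroup E]
  [InnerProductSpace ℝ E] [FiniteDimensional ℝ E] [MeasurableSpace E] [BorelSpace E]
  [NormedAddCommGroup G] [NormedSpace ℂ G] [Fintype ι]

lemma angularFourierInv_magneticLaplacian (a : E) (f : 𝓢(E, G)) (y : E) :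
    angularFourierInv y (magneticLaplacian a f) =
      -((‖y + a‖ ^ 2 : ℝ) : ℂ) • angularFourierInv y f := by
  rw [magneticLaplacian_eq, map_sub, map_sub, map_smul, map_smul, angularFourierInv_laplacian,
    angularFourierInv_lineDeriv, smul_smul, ← sub_smul, ← sub_smul, norm_add_sq_real]
  congr 1
  push_cast
  linear_combination 2 * (⟪y, a⟫ : ℂ) * I_sq

lemma hasFDerivAt_angularFourierInv_schwartzSlice (f : 𝓢(X × E, G)) (x : X) (y : E) :
    HasFDerivAt (fun x' ↦ angularFourierInv y (schwartzSlice x' f))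
      (∫ p, cexp (I * (⟪p, y⟫ : ℂ)) • schwartzSlice x (schwartzFDerivLeft f) p) x := by
  obtain ⟨C, hC_nonneg, hC⟩ := exists_norm_le_mul_rpow_neg_of_isVonNBounded
    (isVonNBounded_singleton (𝕜 := ℝ) (schwartzFDerivLeft f)) (volume : Measure E).integrablePower
  simp only [angularFourierInv_apply]
  refine hasFDerivAt_integral_of_dominated_of_fderiv_le univ_mem
    (.of_forall fun x' ↦ (integrable_cexp_inner_smul (schwartzSlice x' f) y).aestronglyMeasurable)
    (integrable_cexp_inner_smul (schwartzSlice x f) y)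
    (integrable_cexp_inner_smul (schwartzSlice x (schwartzFDerivLeft f)) y).aestronglyMeasurable
    (.of_forall fun p x' _ ↦ ?_)
    ((Measure.integrable_pow_neg_integrablePower volume).const_mul C)
    (.of_forall fun p x' _ ↦ (hasFDerivAt_schwartz_left f x' p).const_smul _)
  rw [norm_smul, mul_comm I, norm_exp_ofReal_mul_I, one_mul]
  refine (hC _ rfl (x', p)).trans (mul_le_mul_of_nonneg_left ?_ hC_nonneg)
  exact Real.rpow_le_rpow_of_nonpos (by positivity) (by gcongr; exact norm_snd_le (x', p))
    (neg_nonpos.2 (Nat.cast_nonneg _))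

lemma fderiv_angularFourierInv_schwartzSlice (f : 𝓢(X × E, G)) (x v : X) (y : E) :
    fderiv ℝ (fun x' ↦ angularFourierInv y (schwartzSlice x' f)) x v =
      angularFourierInv y (schwartzSlice x (∂_{((v, 0) : X × E)} f)) := by
  rw [(hasFDerivAt_angularFourierInv_schwartzSlice f x y).fderiv,
    ContinuousLinearMap.integral_apply (integrable_cexp_inner_smul _ y), angularFourierInv_apply]
  simp only [_root_.smul_apply, schwartzSlice_apply, schwartzFDerivLeft_apply_apply]

/-- The partial transform `(x, y) ↦ ∫ e^{i p·y} f (x, p) dp` in the momentum variable, which takes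
the two-frequency Wigner distribution to the two-frequency mutual coherence function. -/
def momentumFourierInv (f : 𝓢(X × E, G)) (x : X) (y : E) : G :=
  ∫ p, cexp (I * (⟪p, y⟫ : ℂ)) • f (x, p)

lemma momentumFourierInv_eq (f : 𝓢(X × E, G)) (x : X) (y : E) :
    momentumFourierInv f x y = angularFourierInv y (schwartzSlice x f) :=
  (angularFourierInv_apply (schwartzSlice x f) y).symm

lemma I_smul_sum_fderiv_fderiv_momentumFourierInv (b : OrthonormalBasis ι ℝ E)
    (f : 𝓢(E × E, G)) (x y : E) :
    I • ∑ j, fderiv ℝ (fun y' ↦ fderiv ℝ (fun x' ↦ momentumFourierInv f x' y') x (b j)) y (b j) =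
      -angularFourierInv y (schwartzAdvection b x f) := by
  simp only [momentumFourierInv_eq, fderiv_angularFourierInv_schwartzSlice,
    fderiv_angularFourierInv, ← Finset.smul_sum, ← map_sum, ← schwartzAdvection_eq_sum]
  rw [smul_smul, I_mul_I, neg_one_smul]

theorem paraxial_transport_to_mutual_coherence_general [CompleteSpace G]
    (b : OrthonormalBasis ι ℝ E) (ν₀ : ℂ) (β : ℝ) (W F : ℝ → 𝓢(E × E, G))
    (hWdiff : ∀ x p, Differentiable ℝ fun z ↦ W z (x, p))
    (hWbdd : ∀ K, IsCompact K → IsVonNBounded ℝ (W '' K))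
    (hFbdd : ∀ K, IsCompact K → IsVonNBounded ℝ (F '' K))
    (heq : ∀ z x p,
      deriv (fun z' ↦ W z' (x, p)) z + fderiv ℝ (fun x' ↦ W z (x', p)) x p
          + (I * ν₀) • W z (x, p) - F z (x, p) =
        (∑ j, fderiv ℝ (fun p' ↦ fderiv ℝ (fun p'' ↦ W z (x, p'')) p' (b j)) p (b j))
          - (2 * I * β) • fderiv ℝ (fun p' ↦ W z (x, p')) p x
          - ((β ^ 2 * ‖x‖ ^ 2 : ℝ) : ℂ) • W z (x, p))
    (z : ℝ) (x y : E) :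
    deriv (fun z' ↦ momentumFourierInv (W z') x y) z
        - I • (∑ j, fderiv ℝ
            (fun y' ↦ fderiv ℝ (fun x' ↦ momentumFourierInv (W z) x' y') x (b j)) y (b j))
        + (I * ν₀) • momentumFourierInv (W z) x y - momentumFourierInv (F z) x y =
      -((‖y + β • x‖ ^ 2 : ℝ) : ℂ) • momentumFourierInv (W z) x y := by
  let rate (t : ℝ) : 𝓢(E, G) := paraxialGenerator b ν₀ β x (W t) + schwartzSlice x (F t)
  have hrate_bdd : IsVonNBounded ℝ (rate '' Metric.closedBall z 1) := by
    refine (((hWbdd _ (isCompact_closedBall z 1)).image (paraxialGenerator b ν₀ β x)).add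
      ((hFbdd _ (isCompact_closedBall z 1)).image (schwartzSlice x))).subset ?_
    rintro _ ⟨t, ht, rfl⟩
    exact Set.add_mem_add ⟨_, ⟨t, ht, rfl⟩, rfl⟩ ⟨_, ⟨t, ht, rfl⟩, rfl⟩
  have hslice_deriv (t : ℝ) (p : E) :
      HasDerivAt (fun t' ↦ schwartzSlice x (W t') p) (rate t p) t :=
    deriv_eq_paraxialGenerator_add (heq t x p) ▸ (hWdiff x p t).hasDerivAt
  have hderiv := hasDerivAt_angularFourierInv (Metric.closedBall_mem_nhds z one_pos) hrate_bdd
    (fun t _ ↦ hslice_deriv t) y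
  rw [I_smul_sum_fderiv_fderiv_momentumFourierInv]
  simp only [momentumFourierInv_eq]
  rw [hderiv.deriv, map_add, paraxialGenerator_eq, map_sub, map_sub, map_smul,
    angularFourierInv_magneticLaplacian]
  abel

end MomentumTransform

/-- Fourier inversion in the momentum variable converts the paraxial
two-frequency transport equation
`∂_z W + p·∇ₓW + iν₀W − F = (∇_p − iβx)·(∇_p − iβx)W`
into the two-frequency mutual coherence equation
`∂_z Γ − i ∑_j ∂²Γ/∂y_j∂x_j + iν₀Γ − F̂ = −|y + βx|² Γ`,
where `Γ(z,x,y) = ∫ W(z,x,p) e^{i p·y} dp` and likewise for `F̂`. The functions `W, F` are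
smooth and Schwartz in `(x,p)` uniformly on compact `z`-intervals. -/
theorem paraxial_transport_to_mutual_coherence
    (ν₀ : ℂ) (β : ℝ)
    (W F : ℝ → EuclideanSpace ℝ (Fin 2) → EuclideanSpace ℝ (Fin 2) → ℂ)
    (hWsmooth : ContDiff ℝ (⊤ : ℕ∞)
      (fun q : ℝ × EuclideanSpace ℝ (Fin 2) × EuclideanSpace ℝ (Fin 2) => W q.1 q.2.1 q.2.2))
    (hFsmooth : ContDiff ℝ (⊤ : ℕ∞)
      (fun q : ℝ × EuclideanSpace ℝ (Fin 2) × EuclideanSpace ℝ (Fin 2) => F q.1 q.2.1 q.2.2))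
    (WS FS : ℝ → SchwartzMap (EuclideanSpace ℝ (Fin 2) × EuclideanSpace ℝ (Fin 2)) ℂ)
    (hWS : ∀ z x p, W z x p = WS z (x, p))
    (hFS : ∀ z x p, F z x p = FS z (x, p))
    (hWunif : ∀ K : Set ℝ, IsCompact K → ∀ kk nn : ℕ,
      ∃ C : ℝ, ∀ z ∈ K, SchwartzMap.seminorm ℝ kk nn (WS z) ≤ C)
    (hFunif : ∀ K : Set ℝ, IsCompact K → ∀ kk nn : ℕ,
      ∃ C : ℝ, ∀ z ∈ K, SchwartzMap.seminorm ℝ kk nn (FS z) ≤ C)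
    (heq : ∀ (z : ℝ) (x p : EuclideanSpace ℝ (Fin 2)),
      deriv (fun z' => W z' x p) z
          + fderiv ℝ (fun x' => W z x' p) x p
          + Complex.I * ν₀ * W z x p - F z x p
        = (∑ j : Fin 2,
              fderiv ℝ (fun p' => fderiv ℝ (fun p'' => W z x p'') p' (EuclideanSpace.single j 1))
                p (EuclideanSpace.single j 1))
          - 2 * Complex.I * (β : ℂ) * fderiv ℝ (fun p' => W z x p') p x
          - ((β ^ 2 * ‖x‖ ^ 2 : ℝ) : ℂ) * W z x p)
    (Γ Fh : ℝ → EuclideanSpace ℝ (Fin 2) → EuclideanSpace ℝ (Fin 2) → ℂ)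
    (hΓ : ∀ z x y, Γ z x y =
      ∫ p : EuclideanSpace ℝ (Fin 2), W z x p * Complex.exp (Complex.I * (⟪p, y⟫ : ℂ)))
    (hFh : ∀ z x y, Fh z x y =
      ∫ p : EuclideanSpace ℝ (Fin 2), F z x p * Complex.exp (Complex.I * (⟪p, y⟫ : ℂ))) :
    ∀ (z : ℝ) (x y : EuclideanSpace ℝ (Fin 2)),
      deriv (fun z' => Γ z' x y) z
          - Complex.I *
            (∑ j : Fin 2,
              fderiv ℝ (fun y' => fderiv ℝ (fun x' => Γ z x' y') x (EuclideanSpace.single j 1))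
                y (EuclideanSpace.single j 1))
          + Complex.I * ν₀ * Γ z x y - Fh z x y
        = -((‖y + β • x‖ ^ 2 : ℝ) : ℂ) * Γ z x y := by
  simp only [hΓ, hFh, hWS, hFS] at hWsmooth heq ⊢
  have hWdiff (x p) : Differentiable ℝ fun z ↦ WS z (x, p) :=
    (hWsmooth.comp (contDiff_id.prodMk (contDiff_const (c := (x, p))))).differentiable (by simp)
  simpa only [EuclideanSpace.basisFun_apply, smul_eq_mul, momentumFourierInv, mul_comm (cexp _)]
    using paraxial_transport_to_mutual_coherence_general (EuclideanSpace.basisFun (Fin 2) ℝ)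
      ν₀ β WS FS hWdiff
      (fun K hK ↦ isVonNBounded_image_schwartz_iff.2 (hWunif K hK))
      (fun K hK ↦ isVonNBounded_image_schwartz_iff.2 (hFunif K hK))
      (by simpa only [EuclideanSpace.basisFun_apply, smul_eq_mul] using heq)
end
end

section
/- Let β > 0, ν₀ ∈ ℂ, and fix x', y' ∈ ℝ². Set γ = (1+i)√(2β) ∈ ℂ, so that γ² = 4iβ. Then sinh(γz) ≠ 0 and cosh(γz) ≠ 0 for every real z > 0, and the function G(z,x,y) = e^{−iν₀z} · (γ / ((2π)² z sinh(γz))) · exp( |y − βx − (y' − βx')|² / (γ² z) ) · exp( −(coth(γz)/γ) · | y + βx − (y' + βx')/cosh(γz) |² ) · exp( −(tanh(γz)/γ) · |y' + βx'|² ), defined for z > 0 and x, y ∈ ℝ², is smooth and satisfies for all z > 0, x, y ∈ ℝ² the homogeneous two-frequency mutual coherence equation ∂_z G − i ∑_{j=1}^{2} ∂²G/∂y_j∂x_j + iν₀ G + |y + βx|² G = 0. -/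
open MeasureTheory Complex Filter
open scoped RealInnerProductSpace Topology

noncomputable section

open Laplacian Module

/-!
In the variables `u = y - βx` and `w = y + βx` the operator `∑ⱼ ∂_{yⱼ} ∂_{xⱼ}` becomes
`β (Δ_w - Δ_u)`, so the equation separates: `G` is the product of a heat kernel in `u`, with
diffusivity `-iβ`, and a Mehler kernel in `w`, with diffusivity `iβ = γ² / 4`, unit quadratic
absorption and damping rate `iν₀`. Both factors are Gaussians whose time-dependent coefficients
solve a Riccati system, and completing the square in the exponent of the Mehler kernel gives the
closed form of `G`. The real part of `γ z` is positive, so the hyperbolic functions do not vanish.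
-/

section Hyperbolic

variable {w : ℂ}

lemma norm_exp_ne_norm_exp_neg (hw : w.re ≠ 0) : ‖exp w‖ ≠ ‖exp (-w)‖ := by
  rw [norm_exp, norm_exp, neg_re, Real.exp_injective.ne_iff]
  exact fun h => hw (self_eq_neg.mp h)

lemma sinh_ne_zero_of_re_ne_zero (hw : w.re ≠ 0) : sinh w ≠ 0 := by
  intro h
  have hexp : exp w - exp (-w) = 0 := by rw [← two_sinh, h, mul_zero]
  exact norm_exp_ne_norm_exp_neg hw (congrArg norm (sub_eq_zero.mp hexp))

lemma cosh_ne_zero_of_re_ne_zero (hw : w.re ≠ 0) : cosh w ≠ 0 := by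
  intro h
  have hexp : exp w + exp (-w) = 0 := by rw [← two_cosh, h, mul_zero]
  exact norm_exp_ne_norm_exp_neg hw (by rw [eq_neg_of_add_eq_zero_left hexp, norm_neg])

end Hyperbolic

lemma one_add_I_mul_sqrt_two_mul_sq {β : ℝ} (hβ : 0 ≤ β) :
    ((1 + I) * (√(2 * β) : ℂ)) ^ 2 = 4 * I * β := by
  have hsqrt : (√(2 * β) : ℂ) ^ 2 = 2 * β := by
    exact_mod_cast congrArg ofReal (Real.sq_sqrt (by positivity : 0 ≤ 2 * β))
  rw [mul_pow, hsqrt]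
  linear_combination (2 * β : ℂ) * I_sq

section SecondDerivatives

lemma laplacian_eq_sum_fderiv_fderiv {E F ι : Type*} [NormedAddCommGroup E]
    [InnerProductSpace ℝ E] [FiniteDimensional ℝ E] [NormedAddCommGroup F] [NormedSpace ℝ F]
    [Fintype ι] (b : OrthonormalBasis ι ℝ E) {f : E → F} (hf : ContDiff ℝ 2 f) (v : E) :
    Δ f v = ∑ i, fderiv ℝ (fun u => fderiv ℝ f u (b i)) v (b i) := by
  have hf' : DifferentiableAt ℝ (fderiv ℝ f) v :=
    (hf.fderiv_right (m := 1) le_rfl).differentiable one_ne_zero v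
  rw [InnerProductSpace.laplacian_eq_iteratedFDeriv_orthonormalBasis f b]
  refine Finset.sum_congr rfl fun i _ => ?_
  rw [iteratedFDeriv_two_apply, fderiv_clm_apply hf' (differentiableAt_const _)]
  simp

section Mixed

variable {E 𝔸 : Type*} [NormedAddCommGroup E] [NormedSpace ℝ E]
  [NormedCommRing 𝔸] [NormedAlgebra ℝ 𝔸] {f g : E → 𝔸}

lemma fderiv_mul_sub_smul_add_smul (hf : Differentiable ℝ f) (hg : Differentiable ℝ g)
    (β : ℝ) (x y v : E) :
    fderiv ℝ (fun x => f (y - β • x) * g (y + β • x)) x v =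
      β • (f (y - β • x) * fderiv ℝ g (y + β • x) v -
        fderiv ℝ f (y - β • x) v * g (y + β • x)) := by
  have hsub : HasFDerivAt (fun x : E => y - β • x) (-(β • .id ℝ E)) x :=
    ((hasFDerivAt_id x).const_smul β).const_sub y
  have hadd : HasFDerivAt (fun x : E => y + β • x) (β • .id ℝ E) x :=
    ((hasFDerivAt_id x).const_smul β).const_add y
  have hmul := ((hf _).hasFDerivAt.comp x hsub).mul ((hg _).hasFDerivAt.comp x hadd)
  refine (congrArg (· v) hmul.fderiv).trans ?_
  simp [mul_comm, sub_eq_add_neg]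

lemma hasFDerivAt_mul_sub_add (hf : Differentiable ℝ f) (hg : Differentiable ℝ g) (c y : E) :
    HasFDerivAt (fun y => f (y - c) * g (y + c))
      (f (y - c) • fderiv ℝ g (y + c) + g (y + c) • fderiv ℝ f (y - c)) y :=
  ((hf _).hasFDerivAt.comp y ((hasFDerivAt_id y).sub_const c)).mul
    ((hg _).hasFDerivAt.comp y ((hasFDerivAt_id y).add_const c))

-- The cross terms `∂f ∂g` of the two first-order factors cancel.
lemma fderiv_fderiv_mul_sub_smul_add_smul (hf : ContDiff ℝ 2 f) (hg : ContDiff ℝ 2 g)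
    (β : ℝ) (x y v : E) :
    fderiv ℝ (fun y => fderiv ℝ (fun x => f (y - β • x) * g (y + β • x)) x v) y v =
      β • (f (y - β • x) * fderiv ℝ (fun w => fderiv ℝ g w v) (y + β • x) v -
        fderiv ℝ (fun u => fderiv ℝ f u v) (y - β • x) v * g (y + β • x)) := by
  have hf₁ : Differentiable ℝ f := hf.differentiable two_ne_zero
  have hg₁ : Differentiable ℝ g := hg.differentiable two_ne_zero
  have hf₂ : Differentiable ℝ fun u => fderiv ℝ f u v :=
    ((hf.fderiv_right (m := 1) le_rfl).clm_apply contDiff_const).differentiable one_ne_zero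
  have hg₂ : Differentiable ℝ fun u => fderiv ℝ g u v :=
    ((hg.fderiv_right (m := 1) le_rfl).clm_apply contDiff_const).differentiable one_ne_zero
  simp_rw [fderiv_mul_sub_smul_add_smul hf₁ hg₁]
  have hderiv := ((hasFDerivAt_mul_sub_add hf₁ hg₂ (β • x) y).sub
    (hasFDerivAt_mul_sub_add hf₂ hg₁ (β • x) y)).const_smul β
  refine (congrArg (· v) hderiv.fderiv).trans ?_
  simp only [sub_apply, add_apply, smul_apply, smul_eq_mul]
  congr 1
  ring

end Mixed

lemma sum_fderiv_fderiv_mul_sub_smul_add_smul {E ι : Type*} [NormedAddCommGroup E]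
    [InnerProductSpace ℝ E] [FiniteDimensional ℝ E] [Fintype ι] (b : OrthonormalBasis ι ℝ E)
    {f g : E → ℂ} (hf : ContDiff ℝ 2 f) (hg : ContDiff ℝ 2 g) (β : ℝ) (x y : E) :
    ∑ i, fderiv ℝ (fun y => fderiv ℝ (fun x => f (y - β • x) * g (y + β • x)) x (b i)) y (b i) =
      β * (f (y - β • x) * Δ g (y + β • x) - Δ f (y - β • x) * g (y + β • x)) := by
  simp_rw [fderiv_fderiv_mul_sub_smul_add_smul hf hg, laplacian_eq_sum_fderiv_fderiv b hf,
    laplacian_eq_sum_fderiv_fderiv b hg, Finset.mul_sum, Finset.sum_mul,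
    ← Finset.sum_sub_distrib, Finset.mul_sum, real_smul]

end SecondDerivatives

section Separation

variable {E ι : Type*} [NormedAddCommGroup E] [InnerProductSpace ℝ E] [FiniteDimensional ℝ E]
  [Fintype ι]

lemma coherence_equation_of_separated (b : OrthonormalBasis ι ℝ E) {H M : ℝ → E → ℂ} {β z : ℝ}
    {ν₀ : ℂ} {x y : E} (hH₂ : ContDiff ℝ 2 (H z)) (hM₂ : ContDiff ℝ 2 (M z))
    (hH : HasDerivAt (fun t => H t (y - β • x)) (-(I * β) * Δ (H z) (y - β • x)) z)
    (hM : HasDerivAt (fun t => M t (y + β • x))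
      (I * β * Δ (M z) (y + β • x) -
        (((‖y + β • x‖ ^ 2 : ℝ) : ℂ) + I * ν₀) * M z (y + β • x)) z) :
    deriv (fun t => H t (y - β • x) * M t (y + β • x)) z
        - I * ∑ i, fderiv ℝ (fun y =>
            fderiv ℝ (fun x => H z (y - β • x) * M z (y + β • x)) x (b i)) y (b i)
        + I * ν₀ * (H z (y - β • x) * M z (y + β • x))
        + ((‖y + β • x‖ ^ 2 : ℝ) : ℂ) * (H z (y - β • x) * M z (y + β • x)) = 0 := by
  rw [sum_fderiv_fderiv_mul_sub_smul_add_smul b hH₂ hM₂, (hH.fun_mul hM).deriv]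
  ring

end Separation

section Gaussian

variable {E : Type*} [NormedAddCommGroup E] [InnerProductSpace ℝ E]

/-- The Gaussian `K exp (a (|v|² + |p|²) + b ⟨p, v⟩)` with complex coefficients, symmetric in the
source `p` and the observation point `v`. Heat and Mehler kernels at a fixed time have this form. -/
def symmGaussian (K a b : ℂ) (p v : E) : ℂ :=
  K * exp (a * ((‖v‖ ^ 2 : ℝ) + (‖p‖ ^ 2 : ℝ)) + b * (⟪p, v⟫ : ℝ))

lemma symmGaussian_neg_two_mul (K a : ℂ) (p v : E) :
    symmGaussian K a (-2 * a) p v = K * exp (a * (‖v - p‖ ^ 2 : ℝ)) := by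
  rw [symmGaussian, norm_sub_sq_real, real_inner_comm]
  congr 2
  push_cast
  ring

lemma contDiffAt_symmGaussian {X : Type*} [NormedAddCommGroup X] [NormedSpace ℝ X]
    {n : WithTop ℕ∞} {K a b : X → ℂ} {v : X → E} {q : X} (hK : ContDiffAt ℝ n K q)
    (ha : ContDiffAt ℝ n a q) (hb : ContDiffAt ℝ n b q) (p : E) (hv : ContDiffAt ℝ n v q) :
    ContDiffAt ℝ n (fun q => symmGaussian (K q) (a q) (b q) p (v q)) q := by
  have hnorm : ContDiffAt ℝ n (fun q => ((‖v q‖ ^ 2 : ℝ) : ℂ)) q :=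
    ofRealCLM.contDiff.contDiffAt.comp q (hv.norm_sq ℝ)
  have hinner : ContDiffAt ℝ n (fun q => ((⟪p, v q⟫ : ℝ) : ℂ)) q :=
    ofRealCLM.contDiff.contDiffAt.comp q (contDiffAt_const.inner ℝ hv)
  unfold symmGaussian
  fun_prop

lemma contDiff_symmGaussian {n : WithTop ℕ∞} (K a b : ℂ) (p : E) :
    ContDiff ℝ n (symmGaussian K a b p) :=
  contDiff_iff_contDiffAt.mpr fun _ =>
    contDiffAt_symmGaussian contDiffAt_const contDiffAt_const contDiffAt_const p contDiffAt_id

lemma fderiv_symmGaussian_apply (K a b : ℂ) (p v e : E) :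
    fderiv ℝ (symmGaussian K a b p) v e =
      symmGaussian K a b p v * (2 * a * (⟪v, e⟫ : ℝ) + b * (⟪p, e⟫ : ℝ)) := by
  have hnorm : HasFDerivAt (fun v : E => ((‖v‖ ^ 2 : ℝ) : ℂ)) _ v :=
    ofRealCLM.hasFDerivAt.comp v (hasStrictFDerivAt_norm_sq v).hasFDerivAt
  have hinner : HasFDerivAt (fun v : E => ((⟪p, v⟫ : ℝ) : ℂ)) _ v :=
    ofRealCLM.hasFDerivAt.comp v (innerSL ℝ p).hasFDerivAt
  have hphase := ((hnorm.add_const ((‖p‖ ^ 2 : ℝ) : ℂ)).const_mul a).add (hinner.const_mul b)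
  have hexp := hphase.cexp.const_mul K
  refine (congrArg (· e) hexp.fderiv).trans ?_
  simp only [symmGaussian, Pi.add_apply, ContinuousLinearMap.comp_smul, add_apply, smul_apply,
    ContinuousLinearMap.comp_apply, coe_innerSL_apply, ofRealCLM_apply, nsmul_eq_mul,
    Nat.cast_ofNat, smul_eq_mul]
  ring

lemma fderiv_fderiv_symmGaussian_apply (K a b : ℂ) (p v e : E) :
    fderiv ℝ (fun u => fderiv ℝ (symmGaussian K a b p) u e) v e =
      symmGaussian K a b p v *
        ((2 * a * (⟪v, e⟫ : ℝ) + b * (⟪p, e⟫ : ℝ)) ^ 2 + 2 * a * (‖e‖ ^ 2 : ℝ)) := by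
  have hinner : HasFDerivAt (fun v : E => ((⟪v, e⟫ : ℝ) : ℂ))
      (ofRealCLM.comp (innerSL ℝ e)) v := by
    simp_rw [real_inner_comm e]
    exact ofRealCLM.hasFDerivAt.comp v (innerSL ℝ e).hasFDerivAt
  have hgauss : HasFDerivAt (symmGaussian K a b p) _ v :=
    ((contDiff_symmGaussian (n := 1) K a b p).differentiable one_ne_zero v).hasFDerivAt
  simp_rw [fderiv_symmGaussian_apply]
  have hmul := hgauss.mul ((hinner.const_mul (2 * a)).add_const (b * (⟪p, e⟫ : ℝ)))
  refine (congrArg (· e) hmul.fderiv).trans ?_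
  simp only [fderiv_symmGaussian_apply, add_apply, smul_apply, ContinuousLinearMap.comp_apply,
    coe_innerSL_apply, real_inner_self_eq_norm_sq, ofRealCLM_apply, smul_eq_mul]
  ring

variable [FiniteDimensional ℝ E]

lemma laplacian_symmGaussian (K a b : ℂ) (p v : E) :
    Δ (symmGaussian K a b p) v = symmGaussian K a b p v *
      (4 * a ^ 2 * (‖v‖ ^ 2 : ℝ) + 4 * a * b * (⟪p, v⟫ : ℝ) + b ^ 2 * (‖p‖ ^ 2 : ℝ) +
        2 * finrank ℝ E * a) := by
  let e := stdOrthonormalBasis ℝ E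
  have hexpand : ∀ i, (2 * a * (⟪v, e i⟫ : ℝ) + b * (⟪p, e i⟫ : ℝ)) ^ 2 + 2 * a * (‖e i‖ ^ 2 : ℝ) =
      4 * a ^ 2 * (⟪v, e i⟫ ^ 2 : ℝ) + 4 * a * b * (⟪p, e i⟫ * ⟪e i, v⟫ : ℝ) +
        b ^ 2 * (⟪p, e i⟫ ^ 2 : ℝ) + 2 * a := fun i => by
    rw [e.norm_eq_one, real_inner_comm v]
    push_cast
    ring
  rw [laplacian_eq_sum_fderiv_fderiv e (contDiff_symmGaussian K a b p)]
  simp_rw [fderiv_fderiv_symmGaussian_apply, hexpand, ← Finset.mul_sum, Finset.sum_add_distrib,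
    ← Finset.mul_sum, ← ofReal_sum, e.sum_sq_inner_left, e.sum_inner_mul_inner,
    Finset.sum_const, Finset.card_univ, Fintype.card_fin, nsmul_eq_mul]
  ring

/- Matching the coefficients of `1`, `|v|²`, `|p|²` and `⟨p, v⟩` turns the evolution equation into
a Riccati system for `K`, `a`, `b`; the two expressions for `a'` come from `|v|²` and `|p|²`. -/
lemma hasDerivAt_symmGaussian {K a b : ℝ → ℂ} {D ω μ : ℂ} {z : ℝ}
    (hK : HasDerivAt K ((2 * finrank ℝ E * D * a z - μ) * K z) z)
    (ha : HasDerivAt a (4 * D * a z ^ 2 - ω) z) (hb : HasDerivAt b (4 * D * a z * b z) z)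
    (hab : D * b z ^ 2 = 4 * D * a z ^ 2 - ω) (p v : E) :
    HasDerivAt (fun t => symmGaussian (K t) (a t) (b t) p v)
      (D * Δ (symmGaussian (K z) (a z) (b z) p) v -
        (ω * (‖v‖ ^ 2 : ℝ) + μ) * symmGaussian (K z) (a z) (b z) p v) z := by
  have hphase := (ha.mul_const ((‖v‖ ^ 2 : ℝ) + (‖p‖ ^ 2 : ℝ) : ℂ)).add
    (hb.mul_const ((⟪p, v⟫ : ℝ) : ℂ))
  refine (hK.mul hphase.cexp).congr_deriv ?_
  rw [laplacian_symmGaussian, symmGaussian, Pi.add_apply]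
  linear_combination -(K z * exp (a z * ((‖v‖ ^ 2 : ℝ) + (‖p‖ ^ 2 : ℝ)) + b z * (⟪p, v⟫ : ℝ)) *
    (‖p‖ ^ 2 : ℝ)) * hab

end Gaussian

section Kernels

variable {E : Type*} [NormedAddCommGroup E] [InnerProductSpace ℝ E]

/-- The heat kernel of `∂_z = D Δ` on a plane with source `p`, for a complex diffusivity `D`,
normalized by `(2π)⁻²` instead of the probabilistic `(4πD)⁻¹`. -/
def planarHeatKernel (D : ℂ) (p : E) (z : ℝ) : E → ℂ :=
  symmGaussian (((2 * Real.pi) ^ 2 : ℝ) * (z : ℂ))⁻¹ (-(4 * D * z)⁻¹) (-2 * -(4 * D * z)⁻¹) p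

/-- The amplitude of the planar Mehler kernel, damped at rate `μ`. -/
def mehlerAmplitude (γ μ : ℂ) (z : ℝ) : ℂ := exp (-(μ * z)) * (γ * (sinh (γ * z))⁻¹)

/-- The coefficient `-coth (γ z) / γ` of `|v|² + |p|²` in the exponent of the Mehler kernel. -/
def mehlerDiagonal (γ : ℂ) (z : ℝ) : ℂ := -(cosh (γ * z) * (γ * sinh (γ * z))⁻¹)

/-- The coefficient of `⟨p, v⟩` in the exponent of the Mehler kernel. -/
def mehlerCross (γ : ℂ) (z : ℝ) : ℂ := 2 * (γ * sinh (γ * z))⁻¹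

/-- The Mehler kernel of `∂_z = (γ² / 4) Δ - |v|² - μ` on a plane with source `p`, up to a constant
factor. -/
def planarMehlerKernel (γ μ : ℂ) (p : E) (z : ℝ) : E → ℂ :=
  symmGaussian (mehlerAmplitude γ μ z) (mehlerDiagonal γ z) (mehlerCross γ z) p

section Smoothness

variable {X : Type*} [NormedAddCommGroup X] [NormedSpace ℝ X] {n : WithTop ℕ∞} {z : X → ℝ}
  {v : X → E} {q : X}

lemma contDiffAt_planarHeatKernel {D : ℂ} (hD : D ≠ 0) (p : E) (hz : ContDiffAt ℝ n z q)
    (hv : ContDiffAt ℝ n v q) (hz₀ : z q ≠ 0) :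
    ContDiffAt ℝ n (fun q => planarHeatKernel D p (z q) (v q)) q := by
  have hzc : ContDiffAt ℝ n (fun q => (z q : ℂ)) q := ofRealCLM.contDiff.contDiffAt.comp q hz
  have ha : ContDiffAt ℝ n (fun q => -(4 * D * (z q : ℂ))⁻¹) q := by
    fun_prop (disch := simp [hD, hz₀])
  refine contDiffAt_symmGaussian ?_ ha (contDiffAt_const.mul ha) p hv
  fun_prop (disch := simp [hz₀, Real.pi_ne_zero])

lemma contDiffAt_planarMehlerKernel {γ : ℂ} (hγ : γ ≠ 0) (μ : ℂ) (p : E)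
    (hz : ContDiffAt ℝ n z q) (hv : ContDiffAt ℝ n v q) (hs : sinh (γ * z q) ≠ 0) :
    ContDiffAt ℝ n (fun q => planarMehlerKernel γ μ p (z q) (v q)) q := by
  have hzc : ContDiffAt ℝ n (fun q => (z q : ℂ)) q := ofRealCLM.contDiff.contDiffAt.comp q hz
  have hγz : ContDiffAt ℝ n (fun q => γ * (z q : ℂ)) q := contDiffAt_const.mul hzc
  have hsinh : ContDiffAt ℝ n (fun q => sinh (γ * z q)) q :=
    (contDiff_sinh.restrict_scalars ℝ).contDiffAt.comp q hγz
  have hcosh : ContDiffAt ℝ n (fun q => cosh (γ * z q)) q :=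
    (contDiff_cosh.restrict_scalars ℝ).contDiffAt.comp q hγz
  have hinv : ContDiffAt ℝ n (fun q => (γ * sinh (γ * z q))⁻¹) q :=
    (contDiffAt_const.mul hsinh).inv (mul_ne_zero hγ hs)
  refine contDiffAt_symmGaussian ?_ (hcosh.mul hinv).neg (contDiffAt_const.mul hinv) p hv
  exact (contDiffAt_const.mul hzc).neg.cexp.mul (contDiffAt_const.mul (hsinh.inv hs))

end Smoothness

section MehlerCoefficients

variable {γ : ℂ} {z : ℝ}

lemma hasDerivAt_sinh_mul_ofReal (γ : ℂ) (z : ℝ) :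
    HasDerivAt (fun t : ℝ => sinh (γ * t)) (cosh (γ * z) * γ) z := by
  simpa using ((hasDerivAt_id (z : ℂ)).const_mul γ).csinh.comp_ofReal

lemma hasDerivAt_cosh_mul_ofReal (γ : ℂ) (z : ℝ) :
    HasDerivAt (fun t : ℝ => cosh (γ * t)) (sinh (γ * z) * γ) z := by
  simpa using ((hasDerivAt_id (z : ℂ)).const_mul γ).ccosh.comp_ofReal

lemma hasDerivAt_mehlerAmplitude (hγ : γ ≠ 0) (μ : ℂ) (hs : sinh (γ * z) ≠ 0) :
    HasDerivAt (mehlerAmplitude γ μ)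
      ((γ ^ 2 * mehlerDiagonal γ z - μ) * mehlerAmplitude γ μ z) z := by
  have hdamp : HasDerivAt (fun t : ℝ => exp (-(μ * t))) (exp (-(μ * z)) * -μ) z := by
    simpa using ((hasDerivAt_id (z : ℂ)).const_mul μ).neg.cexp.comp_ofReal
  have hinv := ((hasDerivAt_sinh_mul_ofReal γ z).fun_inv hs).const_mul γ
  refine (hdamp.fun_mul hinv).congr_deriv ?_
  rw [mehlerAmplitude, mehlerDiagonal]
  generalize exp (-(μ * z)) = d
  field_simp
  ring

lemma hasDerivAt_mehlerDiagonal (hγ : γ ≠ 0) (hs : sinh (γ * z) ≠ 0) :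
    HasDerivAt (mehlerDiagonal γ) (4 * (γ ^ 2 / 4) * mehlerDiagonal γ z ^ 2 - 1) z := by
  have hinv := ((hasDerivAt_sinh_mul_ofReal γ z).const_mul γ).fun_inv (mul_ne_zero hγ hs)
  refine ((hasDerivAt_cosh_mul_ofReal γ z).fun_mul hinv).neg.congr_deriv ?_
  rw [mehlerDiagonal]
  field_simp
  ring

lemma hasDerivAt_mehlerCross (hγ : γ ≠ 0) (hs : sinh (γ * z) ≠ 0) :
    HasDerivAt (mehlerCross γ) (4 * (γ ^ 2 / 4) * mehlerDiagonal γ z * mehlerCross γ z) z := by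
  have hinv := ((hasDerivAt_sinh_mul_ofReal γ z).const_mul γ).fun_inv (mul_ne_zero hγ hs)
  refine (hinv.const_mul 2).congr_deriv ?_
  rw [mehlerDiagonal, mehlerCross]
  field_simp

lemma mehlerCross_sq (hγ : γ ≠ 0) (hs : sinh (γ * z) ≠ 0) :
    γ ^ 2 / 4 * mehlerCross γ z ^ 2 = 4 * (γ ^ 2 / 4) * mehlerDiagonal γ z ^ 2 - 1 := by
  rw [mehlerDiagonal, mehlerCross]
  field_simp
  linear_combination -4 * cosh_sq (γ * z)

end MehlerCoefficients

section Evolution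

variable [FiniteDimensional ℝ E] {z : ℝ}

lemma hasDerivAt_planarHeatKernel (hE : finrank ℝ E = 2) {D : ℂ} (hD : D ≠ 0) (hz : z ≠ 0)
    (p v : E) :
    HasDerivAt (fun t => planarHeatKernel D p t v) (D * Δ (planarHeatKernel D p z) v) z := by
  have hzc : (z : ℂ) ≠ 0 := ofReal_ne_zero.mpr hz
  have hid : HasDerivAt (fun t : ℝ => (t : ℂ)) 1 z := ofRealCLM.hasDerivAt
  have ha : HasDerivAt (fun t : ℝ => -(4 * D * (t : ℂ))⁻¹) (4 * D * (-(4 * D * z)⁻¹) ^ 2 - 0) z :=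
    ((hid.const_mul (4 * D)).fun_inv (by simp [hD, hz])).neg.congr_deriv (by field_simp; ring)
  have hb := (ha.const_mul (-2)).congr_deriv
    (show _ = 4 * D * -(4 * D * (z : ℂ))⁻¹ * (-2 * -(4 * D * (z : ℂ))⁻¹) by ring)
  have hK : HasDerivAt (fun t : ℝ => (((2 * Real.pi) ^ 2 : ℝ) * (t : ℂ))⁻¹)
      ((2 * finrank ℝ E * D * -(4 * D * z)⁻¹ - 0) * (((2 * Real.pi) ^ 2 : ℝ) * (z : ℂ))⁻¹) z := by
    have hden : (((2 * Real.pi) ^ 2 : ℝ) : ℂ) * z ≠ 0 := by simp [hz, Real.pi_ne_zero]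
    refine ((hid.const_mul _).fun_inv hden).congr_deriv ?_
    rw [hE]
    field_simp
    norm_num
  exact (hasDerivAt_symmGaussian hK ha hb (by ring) p v).congr_deriv (by simp [planarHeatKernel])

lemma hasDerivAt_planarMehlerKernel (hE : finrank ℝ E = 2) {γ : ℂ} (hγ : γ ≠ 0) (μ : ℂ)
    (hs : sinh (γ * z) ≠ 0) (p v : E) :
    HasDerivAt (fun t => planarMehlerKernel γ μ p t v)
      (γ ^ 2 / 4 * Δ (planarMehlerKernel γ μ p z) v -
        ((‖v‖ ^ 2 : ℝ) + μ) * planarMehlerKernel γ μ p z v) z := by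
  have hK : HasDerivAt (mehlerAmplitude γ μ)
      ((2 * finrank ℝ E * (γ ^ 2 / 4) * mehlerDiagonal γ z - μ) * mehlerAmplitude γ μ z) z :=
    (hasDerivAt_mehlerAmplitude hγ μ hs).congr_deriv (by rw [hE]; push_cast; ring)
  exact (hasDerivAt_symmGaussian hK (hasDerivAt_mehlerDiagonal hγ hs)
    (hasDerivAt_mehlerCross hγ hs) (mehlerCross_sq hγ hs) p v).congr_deriv (by rw [one_mul]; rfl)

end Evolution

lemma planarHeatKernel_eq_exp_norm_sub_sq (D : ℂ) (p : E) (z : ℝ) (v : E) :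
    planarHeatKernel D p z v =
      (((2 * Real.pi) ^ 2 : ℝ) * (z : ℂ))⁻¹ * exp (-(4 * D * z)⁻¹ * (‖v - p‖ ^ 2 : ℝ)) :=
  symmGaussian_neg_two_mul _ _ p v

lemma sum_ofReal_sq {ι : Type*} [Fintype ι] (v : EuclideanSpace ℝ ι) :
    ∑ j, ((v j : ℝ) : ℂ) ^ 2 = (‖v‖ ^ 2 : ℝ) := by
  simp [EuclideanSpace.norm_sq_eq]

lemma sum_ofReal_sub_div_sq {ι : Type*} [Fintype ι] (p v : EuclideanSpace ℝ ι) (c : ℂ) :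
    ∑ j, (((v j : ℝ) : ℂ) - ((p j : ℝ) : ℂ) / c) ^ 2 =
      (‖v‖ ^ 2 : ℝ) - 2 * (⟪p, v⟫ : ℝ) / c + (‖p‖ ^ 2 : ℝ) / c ^ 2 := by
  have hinner : ((⟪p, v⟫ : ℝ) : ℂ) = ∑ j, ((v j : ℝ) : ℂ) * ((p j : ℝ) : ℂ) := by
    simp [PiLp.inner_apply]
  simp_rw [← sum_ofReal_sq, hinner, Finset.mul_sum, Finset.sum_div, ← Finset.sum_sub_distrib,
    ← Finset.sum_add_distrib]
  exact Finset.sum_congr rfl fun j _ => by ring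

lemma planarMehlerKernel_eq_completed_square {ι : Type*} [Fintype ι] {γ : ℂ} {z : ℝ} (μ : ℂ)
    (hs : sinh (γ * z) ≠ 0) (hc : cosh (γ * z) ≠ 0) (p v : EuclideanSpace ℝ ι) :
    planarMehlerKernel γ μ p z v = mehlerAmplitude γ μ z *
      exp (-(cosh (γ * z) / sinh (γ * z)) / γ *
        ∑ j, (((v j : ℝ) : ℂ) - ((p j : ℝ) : ℂ) / cosh (γ * z)) ^ 2) *
      exp (-(sinh (γ * z) / cosh (γ * z)) / γ * ∑ j, ((p j : ℝ) : ℂ) ^ 2) := by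
  rw [planarMehlerKernel, symmGaussian, mul_assoc, ← exp_add, mehlerDiagonal, mehlerCross,
    sum_ofReal_sub_div_sq, sum_ofReal_sq]
  congr 2
  rcases eq_or_ne γ 0 with rfl | hγ
  · simp
  · field_simp
    linear_combination -(‖p‖ ^ 2 : ℝ) * cosh_sq (γ * z)

lemma planarHeatKernel_mul_planarMehlerKernel {ι : Type*} [Fintype ι] {γ : ℂ} {z : ℝ} (μ : ℂ)
    (hs : sinh (γ * z) ≠ 0) (hc : cosh (γ * z) ≠ 0) (p q u w : EuclideanSpace ℝ ι) :
    planarHeatKernel (-(γ ^ 2 / 4)) p z u * planarMehlerKernel γ μ q z w =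
      exp (-(μ * z)) * (γ / (((2 * Real.pi) ^ 2 : ℝ) * (z : ℂ) * sinh (γ * z))) *
        exp ((∑ j, ((u j - p j : ℝ) : ℂ) ^ 2) / (γ ^ 2 * z)) *
        exp (-(cosh (γ * z) / sinh (γ * z)) / γ *
          ∑ j, (((w j : ℝ) : ℂ) - ((q j : ℝ) : ℂ) / cosh (γ * z)) ^ 2) *
        exp (-(sinh (γ * z) / cosh (γ * z)) / γ * ∑ j, ((q j : ℝ) : ℂ) ^ 2) := by
  have hphase : -(4 * -(γ ^ 2 / 4) * z)⁻¹ * (‖u - p‖ ^ 2 : ℝ) =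
      (∑ j, ((u j - p j : ℝ) : ℂ) ^ 2) / (γ ^ 2 * z) := by
    rw [← sum_ofReal_sq, ← inv_neg, ← div_eq_inv_mul]
    congr 1
    ring
  rw [planarHeatKernel_eq_exp_norm_sub_sq, planarMehlerKernel_eq_completed_square μ hs hc, hphase,
    mehlerAmplitude]
  ring

end Kernels

/-- The closed-form Green function of the paraxial two-frequency
geometrical radiative transfer equation in normalized variables. With `γ = (1+i)√(2β)`
(so `γ² = 4iβ`), `sinh(γz) ≠ 0` and `cosh(γz) ≠ 0` for `z > 0`, and
`G(z,x,y) = e^{−iν₀z} (γ/((2π)² z sinh(γz))) exp(|y−βx−(y'−βx')|²/(γ²z))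
  exp(−(coth(γz)/γ)|y+βx−(y'+βx')/cosh(γz)|²) exp(−(tanh(γz)/γ)|y'+βx'|²)`
is smooth on `z > 0` and satisfies
`∂_z G − i ∑_j ∂²G/∂y_j∂x_j + iν₀G + |y+βx|² G = 0` there; the quadratic form `|v|²` on
complexified vectors is `∑_j v_j²`. -/
theorem paraxial_green_function
    (β : ℝ) (hβ : 0 < β) (ν₀ : ℂ) (x' y' : EuclideanSpace ℝ (Fin 2))
    (γ : ℂ) (hγ : γ = (1 + Complex.I) * (Real.sqrt (2 * β) : ℂ))
    (G : ℝ → EuclideanSpace ℝ (Fin 2) → EuclideanSpace ℝ (Fin 2) → ℂ)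
    (hG : ∀ (z : ℝ) (x y : EuclideanSpace ℝ (Fin 2)), G z x y =
      Complex.exp (-(Complex.I * ν₀ * (z : ℂ))) *
        (γ / (((2 * Real.pi) ^ 2 : ℝ) * (z : ℂ) * Complex.sinh (γ * z))) *
        Complex.exp
          ((∑ j : Fin 2, (((y j - β * x j - (y' j - β * x' j) : ℝ)) : ℂ) ^ 2) /
            (γ ^ 2 * (z : ℂ))) *
        Complex.exp
          (-(Complex.cosh (γ * z) / Complex.sinh (γ * z)) / γ *
            (∑ j : Fin 2,
              (((y j + β * x j : ℝ) : ℂ) -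
                  ((y' j + β * x' j : ℝ) : ℂ) / Complex.cosh (γ * z)) ^ 2)) *
        Complex.exp
          (-(Complex.sinh (γ * z) / Complex.cosh (γ * z)) / γ *
            (∑ j : Fin 2, (((y' j + β * x' j : ℝ)) : ℂ) ^ 2))) :
    γ ^ 2 = 4 * Complex.I * (β : ℂ) ∧
    (∀ z : ℝ, 0 < z → Complex.sinh (γ * z) ≠ 0 ∧ Complex.cosh (γ * z) ≠ 0) ∧
    ContDiffOn ℝ (⊤ : ℕ∞)
      (fun q : ℝ × EuclideanSpace ℝ (Fin 2) × EuclideanSpace ℝ (Fin 2) =>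
        G q.1 q.2.1 q.2.2)
      (Set.Ioi (0 : ℝ) ×ˢ (Set.univ : Set (EuclideanSpace ℝ (Fin 2) × EuclideanSpace ℝ (Fin 2)))) ∧
    (∀ z : ℝ, 0 < z → ∀ x y : EuclideanSpace ℝ (Fin 2),
      deriv (fun z' => G z' x y) z
          - Complex.I *
            (∑ j : Fin 2,
              fderiv ℝ (fun y'' => fderiv ℝ (fun x'' => G z x'' y'') x (EuclideanSpace.single j 1))
                y (EuclideanSpace.single j 1))
          + Complex.I * ν₀ * G z x y
          + ((‖y + β • x‖ ^ 2 : ℝ) : ℂ) * G z x y = 0) := by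
  have hγ_sq : γ ^ 2 = 4 * I * β := hγ ▸ one_add_I_mul_sqrt_two_mul_sq hβ.le
  have hdiff : γ ^ 2 / 4 = I * β := by rw [hγ_sq]; ring
  have hIβ : -(I * (β : ℂ)) ≠ 0 := by simp [hβ.ne']
  have hγ₀ : γ ≠ 0 := fun h => by simp [h, hβ.ne'] at hγ_sq
  have hsc : ∀ z : ℝ, 0 < z → sinh (γ * z) ≠ 0 ∧ cosh (γ * z) ≠ 0 := fun z hz => by
    have hre : (γ * z).re ≠ 0 := by simp [hγ, hz.ne', hβ.le, hβ.ne']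
    exact ⟨sinh_ne_zero_of_re_ne_zero hre, cosh_ne_zero_of_re_ne_zero hre⟩
  have hprod : ∀ z : ℝ, 0 < z → ∀ x y, G z x y =
      planarHeatKernel (-(I * β)) (y' - β • x') z (y - β • x) *
        planarMehlerKernel γ (I * ν₀) (y' + β • x') z (y + β • x) := fun z hz x y => by
    rw [← hdiff, planarHeatKernel_mul_planarMehlerKernel _ (hsc z hz).1 (hsc z hz).2]
    exact hG z x y
  refine ⟨hγ_sq, hsc, ?_, fun z hz x y => ?_⟩
  · refine ContDiffOn.congr (fun q hq => ?_) fun q hq => hprod q.1 hq.1 q.2.1 q.2.2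
    exact ((contDiffAt_planarHeatKernel hIβ _ (by fun_prop) (by fun_prop) hq.1.ne').mul
      (contDiffAt_planarMehlerKernel hγ₀ _ _ (by fun_prop) (by fun_prop)
        (hsc q.1 hq.1).1)).contDiffWithinAt
  · have hprod_nhds : (fun t => G t x y) =ᶠ[𝓝 z] _ :=
      (eventually_gt_nhds hz).mono fun t ht => hprod t ht x y
    rw [hprod_nhds.deriv_eq]
    simp_rw [hprod z hz]
    simpa using coherence_equation_of_separated (EuclideanSpace.basisFun (Fin 2) ℝ)
      (contDiff_symmGaussian _ _ _ _) (contDiff_symmGaussian _ _ _ _)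
      (hasDerivAt_planarHeatKernel finrank_euclideanSpace_fin hIβ hz.ne' _ _)
      (hdiff ▸ hasDerivAt_planarMehlerKernel finrank_euclideanSpace_fin hγ₀ _ (hsc z hz).1 _ _)
end
end

section
/- Let k > 0, C > 0, β ∈ ℝ, ν₀ ∈ ℂ, and let W̄, S : ℝ³ × ℝ³ → ℂ be smooth functions satisfying, for all x ∈ ℝ³ and all p ∈ ℝ³ with p ≠ 0, the two-frequency geometrical radiative transfer equation p·∇ₓW̄ + iν₀W̄ − S = (1/(4k)) (∇_p − iβx) · ( C|p|⁻¹ Π(p) (∇_p − iβx) W̄ ), where Π(p) = I − (p⊗p)/|p|². Set a = (C/4)^{1/3} k^{−1/3} and β̃ = a²β = (C/4)^{2/3} k^{−2/3} β, and define W̃(x̃,p̃) = W̄(a x̃, a p̃) and S̃(x̃,p̃) = S(a x̃, a p̃). Then W̃ satisfies, for all x̃ ∈ ℝ³ and p̃ ≠ 0, the parameter-free standard form p̃·∇_x̃ W̃ + iν₀ W̃ − S̃ = (∇_p̃ − iβ̃x̃) · ( |p̃|⁻¹ Π(p̃) (∇_p̃ − iβ̃x̃) W̃ ). (In particular, in the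 paper's convention x = σₓ k x̃, p = σ_p p̃/k, the spatial spread is σₓ = (C/4)^{1/3} k^{−4/3}, the spatial-frequency spread is σ_p = (C/4)^{1/3} k^{2/3}, and the coherence bandwidth is β_c = (4/C)^{2/3} k^{2/3}.) -/
open MeasureTheory Complex Filter
open scoped RealInnerProductSpace Topology

noncomputable section

/-- The matrix of the orthogonal projection `Π(p) = I − p⊗p/|p|²` onto the plane
orthogonal to `p ∈ ℝ³`, entrywise. -/
def projMat (p : EuclideanSpace ℝ (Fin 3)) (j l : Fin 3) : ℝ :=
  (if j = l then 1 else 0) - p j * p l / ‖p‖ ^ 2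

/-- The shifted gradient `(∇_p − iβx)W` in the momentum variable, componentwise. -/
def shiftGrad (β : ℝ) (W : EuclideanSpace ℝ (Fin 3) → EuclideanSpace ℝ (Fin 3) → ℂ)
    (x p : EuclideanSpace ℝ (Fin 3)) (l : Fin 3) : ℂ :=
  fderiv ℝ (fun p' => W x p') p (EuclideanSpace.single l 1)
    - Complex.I * (β : ℂ) * ((x l : ℝ) : ℂ) * W x p

/-- The vector field `C|p|⁻¹ Π(p) (∇_p − iβx)W`, componentwise. -/
def diffVec (Cc β : ℝ) (W : EuclideanSpace ℝ (Fin 3) → EuclideanSpace ℝ (Fin 3) → ℂ)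
    (x p : EuclideanSpace ℝ (Fin 3)) (j : Fin 3) : ℂ :=
  ∑ l : Fin 3, ((Cc * ‖p‖⁻¹ * projMat p j l : ℝ) : ℂ) * shiftGrad β W x p l

/-- The shifted divergence `(∇_p − iβx)·(C|p|⁻¹ Π(p)(∇_p − iβx)W)` appearing on the
right-hand side of the two-frequency geometrical radiative transfer equation. -/
def grtDiv (Cc β : ℝ) (W : EuclideanSpace ℝ (Fin 3) → EuclideanSpace ℝ (Fin 3) → ℂ)
    (x p : EuclideanSpace ℝ (Fin 3)) : ℂ :=
  ∑ j : Fin 3,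
    (fderiv ℝ (fun p' => diffVec Cc β W x p' j) p (EuclideanSpace.single j 1)
      - Complex.I * (β : ℂ) * ((x j : ℝ) : ℂ) * diffVec Cc β W x p j)

/-!
Under the dilation `(x, p) ↦ (a x, a p)`, with `β` replaced by `a² β`, the transport term
`p · ∇ₓ` and the projection `Π(p)` are invariant, each of the two shifted momentum derivatives
contributes a factor `a`, and `|p|⁻¹` contributes a factor `|a|`. The diffusion term is therefore
multiplied by `|a|³`, and the choice `a³ = C / (4k)` normalizes its coefficient to one.
-/

local notation "ℝ³" => EuclideanSpace ℝ (Fin 3)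

theorem fderiv_const_smul_comp_smul {𝕜 E F : Type*} [NontriviallyNormedField 𝕜]
    [NormedAddCommGroup E] [NormedSpace 𝕜 E] [NormedAddCommGroup F] [NormedSpace 𝕜 F]
    (c a : 𝕜) (f : E → F) (p : E) :
    fderiv 𝕜 (fun p' => c • f (a • p')) p = (c * a) • fderiv 𝕜 f (a • p) := by
  change fderiv 𝕜 (c • fun p' => f (a • p')) p = _
  rw [fderiv_const_smul_field, Pi.smul_apply, fderiv_comp_smul, smul_smul]

/-- The simultaneous dilation `(x, p) ↦ f (a x, a p)` of a function of position and momentum. -/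
def dilate {E F : Type*} [SMul ℝ E] (a : ℝ) (f : E → E → F) (x p : E) : F :=
  f (a • x) (a • p)

theorem fderiv_dilate_left_apply {E F : Type*} [NormedAddCommGroup E] [NormedSpace ℝ E]
    [NormedAddCommGroup F] [NormedSpace ℝ F] (a : ℝ) (f : E → E → F) (x p : E) :
    fderiv ℝ (fun x' => dilate a f x' p) x p
      = fderiv ℝ (fun x' => f x' (a • p)) (a • x) (a • p) := by
  rw [map_smul]
  exact congrArg (· p) (fderiv_comp_smul (f := fun x' => f x' (a • p)) a)

theorem contDiff_dilate {E F : Type*} [NormedAddCommGroup E] [NormedSpace ℝ E]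
    [NormedAddCommGroup F] [NormedSpace ℝ F] {n : WithTop ℕ∞} {f : E → E → F}
    (hf : ContDiff ℝ n fun q : E × E => f q.1 q.2) (a : ℝ) :
    ContDiff ℝ n fun q : E × E => dilate a f q.1 q.2 :=
  hf.comp (contDiff_id.const_smul a)

theorem projMat_smul {a : ℝ} (ha : a ≠ 0) (p : ℝ³) (j l : Fin 3) :
    projMat (a • p) j l = projMat p j l := by
  have norm_sq_smul : ‖a • p‖ ^ 2 = a ^ 2 * ‖p‖ ^ 2 := by
    rw [norm_smul, mul_pow, Real.norm_eq_abs, sq_abs]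
  have entry_smul : (a • p) j * (a • p) l = a ^ 2 * (p j * p l) := by
    simp only [PiLp.smul_apply, smul_eq_mul]
    ring
  rw [projMat, projMat, norm_sq_smul, entry_smul, mul_div_mul_left _ _ (pow_ne_zero 2 ha)]

theorem diffVec_const_mul (c D β : ℝ) (W : ℝ³ → ℝ³ → ℂ) (x p : ℝ³) (j : Fin 3) :
    diffVec (c * D) β W x p j = c • diffVec D β W x p j := by
  simp only [diffVec, Finset.smul_sum, Complex.real_smul]
  refine Finset.sum_congr rfl fun l _ => ?_
  push_cast
  ring

theorem grtDiv_const_mul (c D β : ℝ) (W : ℝ³ → ℝ³ → ℂ) (x p : ℝ³) :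
    grtDiv (c * D) β W x p = c • grtDiv D β W x p := by
  simp only [grtDiv, Finset.smul_sum, diffVec_const_mul]
  refine Finset.sum_congr rfl fun j _ => ?_
  have fderiv_eq : fderiv ℝ (fun p' => c • diffVec D β W x p' j) p
      = c • fderiv ℝ (fun p' => diffVec D β W x p' j) p :=
    congrFun (fderiv_const_smul_field c) p
  rw [fderiv_eq, smul_apply, smul_sub, mul_smul_comm]

theorem shiftGrad_dilate (a β : ℝ) (W : ℝ³ → ℝ³ → ℂ) (x p : ℝ³) (l : Fin 3) :
    shiftGrad (a ^ 2 * β) (dilate a W) x p l = a • shiftGrad β W (a • x) (a • p) l := by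
  have fderiv_eq : fderiv ℝ (fun p' => dilate a W x p') p = a • fderiv ℝ (W (a • x)) (a • p) :=
    fderiv_comp_smul (f := W (a • x)) a
  rw [shiftGrad, shiftGrad, fderiv_eq]
  simp only [dilate, smul_apply, PiLp.smul_apply, smul_eq_mul,
    Complex.real_smul]
  push_cast
  ring

theorem diffVec_dilate {a : ℝ} (ha : a ≠ 0) (D β : ℝ) (W : ℝ³ → ℝ³ → ℂ) (x p : ℝ³)
    (j : Fin 3) :
    diffVec D (a ^ 2 * β) (dilate a W) x p j
      = (|a| * a) • diffVec D β W (a • x) (a • p) j := by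
  have coeff_smul (l : Fin 3) : D * ‖p‖⁻¹ * projMat p j l
      = |a| * (D * ‖a • p‖⁻¹ * projMat (a • p) j l) := by
    have habs : |a| ≠ 0 := abs_ne_zero.mpr ha
    rw [projMat_smul ha, norm_smul, Real.norm_eq_abs, mul_inv]
    field_simp
  simp only [diffVec, Finset.smul_sum]
  refine Finset.sum_congr rfl fun l _ => ?_
  rw [shiftGrad_dilate, coeff_smul, Complex.real_smul, Complex.real_smul]
  push_cast
  ring

theorem grtDiv_dilate {a : ℝ} (ha : a ≠ 0) (D β : ℝ) (W : ℝ³ → ℝ³ → ℂ) (x p : ℝ³) :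
    grtDiv D (a ^ 2 * β) (dilate a W) x p = |a| ^ 3 • grtDiv D β W (a • x) (a • p) := by
  have abs_pow_three : |a| ^ 3 = |a| * a * a := by
    rw [pow_succ', sq_abs]
    ring
  simp only [grtDiv, diffVec_dilate ha, Finset.smul_sum]
  refine Finset.sum_congr rfl fun j _ => ?_
  rw [fderiv_const_smul_comp_smul (|a| * a) a (fun p' => diffVec D β W (a • x) p' j),
    abs_pow_three]
  simp only [smul_apply, PiLp.smul_apply, smul_eq_mul, Complex.real_smul]
  push_cast
  ring

/-- `W` is a classical solution with source `S` of the two-frequency geometrical radiative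
transfer equation with diffusion coefficient `D`. Since the right-hand side is linear in the
coefficient, the constants `1 / (4k)` and `C` enter only through `D = C / (4k)`; the standard
form is `D = 1`. Twice continuous differentiability gives every derivative in the equation its
classical meaning away from `p = 0`. -/
structure IsGRTSolution (D β : ℝ) (ν₀ : ℂ) (W S : ℝ³ → ℝ³ → ℂ) : Prop where
  contDiff : ContDiff ℝ 2 fun q : ℝ³ × ℝ³ => W q.1 q.2
  transport_eq : ∀ x p : ℝ³, p ≠ 0 →
    fderiv ℝ (fun x' => W x' p) x p + Complex.I * ν₀ * W x p - S x p = grtDiv D β W x p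

theorem IsGRTSolution.dilate {D β : ℝ} {ν₀ : ℂ} {W S : ℝ³ → ℝ³ → ℂ}
    (h : IsGRTSolution D β ν₀ W S) {a : ℝ} (ha : a ≠ 0) :
    IsGRTSolution (D / |a| ^ 3) (a ^ 2 * β) ν₀ (dilate a W) (dilate a S) where
  contDiff := contDiff_dilate h.contDiff a
  transport_eq x p hp := by
    have coeff_eq : |a| ^ 3 * (D / |a| ^ 3) = D :=
      mul_div_cancel₀ D (pow_ne_zero 3 (abs_ne_zero.mpr ha))
    rw [fderiv_dilate_left_apply, grtDiv_dilate ha, ← grtDiv_const_mul, coeff_eq]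
    exact h.transport_eq (a • x) (a • p) (smul_ne_zero ha hp)

theorem rpow_third_mul_rpow_neg_third_pow_three {x y : ℝ} (hx : 0 ≤ x) (hy : 0 ≤ y) :
    (x ^ ((1 : ℝ) / 3) * y ^ (-(1 : ℝ) / 3)) ^ 3 = x / y := by
  rw [mul_pow, ← Real.rpow_mul_natCast hx, ← Real.rpow_mul_natCast hy]
  norm_num [Real.rpow_neg_one, div_eq_mul_inv]

theorem rpow_third_mul_rpow_neg_third_sq {x y : ℝ} (hx : 0 ≤ x) (hy : 0 ≤ y) :
    (x ^ ((1 : ℝ) / 3) * y ^ (-(1 : ℝ) / 3)) ^ 2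
      = (x⁻¹ ^ ((2 : ℝ) / 3) * y ^ ((2 : ℝ) / 3))⁻¹ := by
  rw [mul_pow, ← Real.rpow_mul_natCast hx, ← Real.rpow_mul_natCast hy, mul_inv,
    Real.inv_rpow hx, inv_inv, ← Real.rpow_neg hy]
  norm_num

theorem rpow_neg_four_thirds_mul_self {y : ℝ} (hy : y ≠ 0) :
    y ^ (-(4 : ℝ) / 3) * y = y ^ (-(1 : ℝ) / 3) := by
  rw [← Real.rpow_add_one hy]
  norm_num

theorem rpow_two_thirds_div_self {y : ℝ} (hy : y ≠ 0) :
    y ^ ((2 : ℝ) / 3) / y = y ^ (-(1 : ℝ) / 3) := by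
  rw [← Real.rpow_sub_one hy]
  norm_num

theorem grt_rescaling_standard_form_general
    (k C : ℝ) (hk : 0 < k) (hC : 0 < C) (β : ℝ) (ν₀ : ℂ)
    (Wb S : ℝ³ → ℝ³ → ℂ)
    (hW : ContDiff ℝ 2 (fun q : ℝ³ × ℝ³ => Wb q.1 q.2))
    (heq : ∀ x p : ℝ³, p ≠ 0 →
      fderiv ℝ (fun x' => Wb x' p) x p + Complex.I * ν₀ * Wb x p - S x p
        = ((1 / (4 * k) : ℝ) : ℂ) * grtDiv C β Wb x p)
    (a βt : ℝ)
    (ha : a = (C / 4) ^ ((1 : ℝ) / 3) * k ^ (-(1 : ℝ) / 3))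
    (hβt : βt = a ^ 2 * β)
    (Wt St : ℝ³ → ℝ³ → ℂ)
    (hWt : ∀ xt pt, Wt xt pt = Wb (a • xt) (a • pt))
    (hSt : ∀ xt pt, St xt pt = S (a • xt) (a • pt)) :
    (∀ xt pt : ℝ³, pt ≠ 0 →
      fderiv ℝ (fun x' => Wt x' pt) xt pt + Complex.I * ν₀ * Wt xt pt - St xt pt
        = grtDiv 1 βt Wt xt pt)
    ∧ ((C / 4) ^ ((1 : ℝ) / 3) * k ^ (-(4 : ℝ) / 3)) * k = a
    ∧ ((C / 4) ^ ((1 : ℝ) / 3) * k ^ ((2 : ℝ) / 3)) / k = a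
    ∧ βt = β / ((4 / C) ^ ((2 : ℝ) / 3) * k ^ ((2 : ℝ) / 3)) := by
  obtain rfl : Wt = dilate a Wb := funext₂ hWt
  obtain rfl : St = dilate a S := funext₂ hSt
  have hC4 : 0 < C / 4 := by positivity
  have ha_pos : 0 < a := by
    rw [ha]
    positivity
  have a_pow_three : a ^ 3 = 1 / (4 * k) * C := by
    rw [ha, rpow_third_mul_rpow_neg_third_pow_three hC4.le hk.le]
    ring
  have original : IsGRTSolution (a ^ 3) β ν₀ Wb S := ⟨hW, fun x p hp => by
    rw [heq x p hp, a_pow_three, grtDiv_const_mul, Complex.real_smul]⟩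
  have standard : IsGRTSolution 1 βt ν₀ (dilate a Wb) (dilate a S) := by
    have rescaled := original.dilate ha_pos.ne'
    rwa [abs_of_pos ha_pos, div_self (pow_pos ha_pos 3).ne', ← hβt] at rescaled
  refine ⟨standard.transport_eq, ?_, ?_, ?_⟩
  · rw [ha, mul_assoc, rpow_neg_four_thirds_mul_self hk.ne']
  · rw [ha, mul_div_assoc, rpow_two_thirds_div_self hk.ne']
  · rw [hβt, ha, rpow_third_mul_rpow_neg_third_sq hC4.le hk.le, inv_div, inv_mul_eq_div]

/-- Rescaling the two-frequency geometrical radiative transfer equation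
`p·∇ₓW̄ + iν₀W̄ − S = (1/(4k))(∇_p − iβx)·(C|p|⁻¹Π(p)(∇_p − iβx)W̄)` by
`a = (C/4)^{1/3} k^{−1/3}` and `β̃ = a²β` brings it to the parameter-free standard form
`p̃·∇_x̃W̃ + iν₀W̃ − S̃ = (∇_p̃ − iβ̃x̃)·(|p̃|⁻¹Π(p̃)(∇_p̃ − iβ̃x̃)W̃)`; in particular the spatial
spread is `σₓ = (C/4)^{1/3}k^{−4/3}`, the spatial-frequency spread is
`σ_p = (C/4)^{1/3}k^{2/3}` (with `σₓ k = a`, `σ_p/k = a`), and the coherence bandwidth is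
`β_c = (4/C)^{2/3}k^{2/3}` (with `β̃ = β/β_c`). -/
theorem grt_rescaling_standard_form
    (k C : ℝ) (hk : 0 < k) (hC : 0 < C) (β : ℝ) (ν₀ : ℂ)
    (Wb S : EuclideanSpace ℝ (Fin 3) → EuclideanSpace ℝ (Fin 3) → ℂ)
    (hWsmooth : ContDiff ℝ (⊤ : ℕ∞)
      (fun q : EuclideanSpace ℝ (Fin 3) × EuclideanSpace ℝ (Fin 3) => Wb q.1 q.2))
    (hSsmooth : ContDiff ℝ (⊤ : ℕ∞)
      (fun q : EuclideanSpace ℝ (Fin 3) × EuclideanSpace ℝ (Fin 3) => S q.1 q.2))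
    (heq : ∀ x p : EuclideanSpace ℝ (Fin 3), p ≠ 0 →
      fderiv ℝ (fun x' => Wb x' p) x p + Complex.I * ν₀ * Wb x p - S x p
        = ((1 / (4 * k) : ℝ) : ℂ) * grtDiv C β Wb x p)
    (a βt : ℝ)
    (ha : a = (C / 4) ^ ((1 : ℝ) / 3) * k ^ (-(1 : ℝ) / 3))
    (hβt : βt = a ^ 2 * β)
    (Wt St : EuclideanSpace ℝ (Fin 3) → EuclideanSpace ℝ (Fin 3) → ℂ)
    (hWt : ∀ xt pt, Wt xt pt = Wb (a • xt) (a • pt))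
    (hSt : ∀ xt pt, St xt pt = S (a • xt) (a • pt)) :
    (∀ xt pt : EuclideanSpace ℝ (Fin 3), pt ≠ 0 →
      fderiv ℝ (fun x' => Wt x' pt) xt pt + Complex.I * ν₀ * Wt xt pt - St xt pt
        = grtDiv 1 βt Wt xt pt)
    ∧ ((C / 4) ^ ((1 : ℝ) / 3) * k ^ (-(4 : ℝ) / 3)) * k = a
    ∧ ((C / 4) ^ ((1 : ℝ) / 3) * k ^ ((2 : ℝ) / 3)) / k = a
    ∧ βt = β / ((4 / C) ^ ((2 : ℝ) / 3) * k ^ ((2 : ℝ) / 3)) :=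
  grt_rescaling_standard_form_general k C hk hC β ν₀ Wb S
    (contDiff_infty.mp hWsmooth 2) heq a βt ha hβt Wt St hWt hSt
end
end
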